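/- arXiv:0810.4122 — 7 statements merged into one kernel-verified Lean document; each statement's English description precedes it below -/
import Mathlib

section
/- Let θ : ℤ → ℝ be any function for which there exist c ≥ 0 and a function E : ℝ → ℝ such that for all t ≥ 0 one has ∑_{0 < n ≤ t} θ(n) = c·t + E(t). Let 0 ≤ t₁ ≤ t₂ be real numbers and let g : [t₁,t₂] → ℝ have a continuous derivative whose sign changes only R times on [t₁,t₂] (i.e. [t₁,t₂] can be split into R+1 subintervals on each of which g' does not change sign). Then there is an absolute constant K such that |∑_{t₁ < n ≤ t₂} θ(n)g(n) − c·∫_{t₁}^{t₂} g(t) dt| ≤ K·(R+1)·(sup_{t₁ ≤ t ≤ t₂} |E(t)|)·(sup_{t₁ ≤ t ≤ t₂} |g(t)|). -/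
/-!
Abel summation against the summatory function `S(t) = c t + E(t)` of `θ` gives
`∑ θ(n) g(n) = g(t₂) S(t₂) - g(t₁) S(t₁) - ∫ g' S`. Integrating by parts, the contribution of
the linear term `c t` is exactly `c ∫ g`, so the difference to be bounded equals
`g(t₂) E(t₂) - g(t₁) E(t₁) - ∫ g' E`, which is at most
`sup |E| * (|g(t₁)| + |g(t₂)| + ∫ |g'|)`. On each of the `R + 1` intervals where `g'` has constant
sign, `∫ |g'|` is the absolute value of an increment of `g`, hence at most `2 sup |g|`.
-/

section SignChanges

open MeasureTheory

/-- `f` changes sign at most `R` times on `[a, b]`: the interval is cut by a monotone sequence of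
points into `R + 1` closed, possibly degenerate, subintervals on each of which `f` is nonnegative
or nonpositive. -/
def SignChangesAtMost (R : ℕ) (f : ℝ → ℝ) (a b : ℝ) : Prop :=
  ∃ s : ℕ → ℝ, s 0 = a ∧ s (R + 1) = b ∧ (∀ i ≤ R, s i ≤ s (i + 1)) ∧
    ∀ i ≤ R, (∀ x ∈ Set.Icc (s i) (s (i + 1)), 0 ≤ f x) ∨
      (∀ x ∈ Set.Icc (s i) (s (i + 1)), f x ≤ 0)

variable {g g' : ℝ → ℝ} {a b M : ℝ} {R : ℕ}

lemma intervalIntegrable_deriv_of_constant_sign (hab : a ≤ b)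
    (hg : ∀ x ∈ Set.Icc a b, HasDerivAt g (g' x) x)
    (hsign : (∀ x ∈ Set.Icc a b, 0 ≤ g' x) ∨ (∀ x ∈ Set.Icc a b, g' x ≤ 0)) :
    IntervalIntegrable g' volume a b := by
  rw [intervalIntegrable_iff_integrableOn_Ioc_of_le hab]
  have hcont : ContinuousOn g (Set.Icc a b) := HasDerivAt.continuousOn hg
  have hderiv : ∀ x ∈ Set.Ioo a b, HasDerivAt g (g' x) x :=
    fun x hx ↦ hg x (Set.Ioo_subset_Icc_self hx)
  rcases hsign with hpos | hneg
  · exact intervalIntegral.integrableOn_deriv_of_nonneg hcont hderiv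
      fun x hx ↦ hpos x (Set.Ioo_subset_Icc_self hx)
  · have hint : IntegrableOn (fun x ↦ -g' x) (Set.Ioc a b) :=
      intervalIntegral.integrableOn_deriv_of_nonneg hcont.neg (fun x hx ↦ (hderiv x hx).neg)
        fun x hx ↦ neg_nonneg.2 (hneg x (Set.Ioo_subset_Icc_self hx))
    simpa using hint.neg

lemma integral_abs_deriv_of_constant_sign (hab : a ≤ b)
    (hg : ∀ x ∈ Set.Icc a b, HasDerivAt g (g' x) x)
    (hsign : (∀ x ∈ Set.Icc a b, 0 ≤ g' x) ∨ (∀ x ∈ Set.Icc a b, g' x ≤ 0)) :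
    ∫ x in a..b, |g' x| = |g b - g a| := by
  have hint := intervalIntegrable_deriv_of_constant_sign hab hg hsign
  have hIcc : Set.uIcc a b = Set.Icc a b := Set.uIcc_of_le hab
  rw [← intervalIntegral.integral_eq_sub_of_hasDerivAt (by rwa [hIcc]) hint]
  rcases hsign with hpos | hneg
  · rw [abs_of_nonneg (intervalIntegral.integral_nonneg hab hpos)]
    exact intervalIntegral.integral_congr fun x hx ↦ abs_of_nonneg (hpos x (hIcc ▸ hx))
  · rw [← abs_neg, ← intervalIntegral.integral_neg,
      abs_of_nonneg (intervalIntegral.integral_nonneg hab fun x hx ↦ neg_nonneg.2 (hneg x hx))]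
    exact intervalIntegral.integral_congr fun x hx ↦ abs_of_nonpos (hneg x (hIcc ▸ hx))

namespace SignChangesAtMost

lemma exists_subdivision {f : ℝ → ℝ} (h : SignChangesAtMost R f a b) :
    ∃ s : ℕ → ℝ, s 0 = a ∧ s (R + 1) = b ∧ ∀ i < R + 1,
      s i ≤ s (i + 1) ∧ Set.Icc (s i) (s (i + 1)) ⊆ Set.Icc a b ∧
        ((∀ x ∈ Set.Icc (s i) (s (i + 1)), 0 ≤ f x) ∨
          (∀ x ∈ Set.Icc (s i) (s (i + 1)), f x ≤ 0)) := by
  obtain ⟨s, rfl, rfl, hs, hsign⟩ := h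
  have hmono : MonotoneOn s (Set.Iic (R + 1)) :=
    monotoneOn_of_le_add_one Set.ordConnected_Iic
      fun i _ _ hi ↦ hs i (Nat.le_of_succ_le_succ hi)
  refine ⟨s, rfl, rfl, fun i hi ↦ ⟨hs i (by lia), Set.Icc_subset_Icc ?_ ?_, hsign i (by lia)⟩⟩
  · exact hmono (Nat.zero_le _) hi.le (Nat.zero_le i)
  · exact hmono hi Set.self_mem_Iic hi

lemma intervalIntegrable_deriv (h : SignChangesAtMost R g' a b)
    (hg : ∀ x ∈ Set.Icc a b, HasDerivAt g (g' x) x) : IntervalIntegrable g' volume a b := by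
  obtain ⟨s, hsa, hsb, hs⟩ := h.exists_subdivision
  rw [← hsa, ← hsb]
  refine IntervalIntegrable.trans_iterate fun i hi ↦ ?_
  obtain ⟨hle, hsub, hsign⟩ := hs i hi
  exact intervalIntegrable_deriv_of_constant_sign hle (fun x hx ↦ hg x (hsub hx)) hsign

lemma integral_abs_deriv_le (h : SignChangesAtMost R g' a b)
    (hg : ∀ x ∈ Set.Icc a b, HasDerivAt g (g' x) x) (hM : ∀ x ∈ Set.Icc a b, |g x| ≤ M) :
    ∫ x in a..b, |g' x| ≤ (R + 1) * (2 * M) := by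
  obtain ⟨s, hsa, hsb, hs⟩ := h.exists_subdivision
  have hgs : ∀ i < R + 1, ∀ x ∈ Set.Icc (s i) (s (i + 1)), HasDerivAt g (g' x) x :=
    fun i hi x hx ↦ hg x ((hs i hi).2.1 hx)
  have hint : ∀ i < R + 1, IntervalIntegrable (fun x ↦ |g' x|) volume (s i) (s (i + 1)) :=
    fun i hi ↦ (intervalIntegrable_deriv_of_constant_sign (hs i hi).1 (hgs i hi) (hs i hi).2.2).abs
  have hpiece : ∀ i < R + 1, ∫ x in s i..s (i + 1), |g' x| ≤ 2 * M := fun i hi ↦ by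
    obtain ⟨hle, hsub, hsign⟩ := hs i hi
    calc ∫ x in s i..s (i + 1), |g' x| = |g (s (i + 1)) - g (s i)| :=
          integral_abs_deriv_of_constant_sign hle (hgs i hi) hsign
      _ ≤ |g (s (i + 1))| + |g (s i)| := abs_sub _ _
      _ ≤ M + M := add_le_add (hM _ (hsub (Set.right_mem_Icc.2 hle)))
          (hM _ (hsub (Set.left_mem_Icc.2 hle)))
      _ = 2 * M := (two_mul M).symm
  calc ∫ x in a..b, |g' x|
      = ∑ i ∈ Finset.range (R + 1), ∫ x in s i..s (i + 1), |g' x| := by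
        rw [intervalIntegral.sum_integral_adjacent_intervals hint, hsa, hsb]
    _ ≤ ∑ _i ∈ Finset.range (R + 1), 2 * M :=
        Finset.sum_le_sum fun i hi ↦ hpiece i (Finset.mem_range.1 hi)
    _ = (R + 1) * (2 * M) := by simp

end SignChangesAtMost

end SignChanges

section AbelSummation

open MeasureTheory Finset

lemma sum_Ioc_natCast {A : Type*} [AddCommMonoid A] (f : ℤ → A) (m n : ℕ) :
    ∑ j ∈ Ioc (m : ℤ) n, f j = ∑ k ∈ Ioc m n, f k :=
  (sum_nbij (Nat.cast : ℕ → ℤ) (by simp) Nat.cast_injective.injOn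
    (by rw [coe_Ioc, coe_Ioc, ← Nat.image_cast_int_Ioc]; exact Set.surjOn_image _ _)
    fun _ _ ↦ rfl).symm

lemma sum_Icc_one_floor_eq_sum_Icc_zero {A : Type*} [AddCommMonoid A] (θ : ℤ → A) {t : ℝ}
    (ht : 0 ≤ t) :
    ∑ n ∈ Icc 1 ⌊t⌋, θ n = ∑ k ∈ Icc 0 ⌊t⌋₊, if k = 0 then 0 else θ k := by
  rw [← zero_add (1 : ℤ), Icc_add_one_left_eq_Ioc, ← Int.natCast_floor_eq_floor ht,
    ← Nat.cast_zero, sum_Ioc_natCast, ← add_sum_Ioc_eq_sum_Icc (Nat.zero_le _), if_pos rfl,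
    zero_add]
  exact sum_congr rfl fun k hk ↦ (if_neg (mem_Ioc.1 hk).1.ne').symm

variable {𝕜 : Type*} [RCLike 𝕜] {f f' : ℝ → 𝕜} {a b : ℝ}

lemma intervalIntegrable_mul_sum_Icc_one (θ : ℤ → 𝕜) (ha : 0 ≤ a) (hab : a ≤ b)
    (hf : IntervalIntegrable f volume a b) :
    IntervalIntegrable (fun t ↦ f t * ∑ n ∈ Icc 1 ⌊t⌋, θ n) volume a b := by
  rw [intervalIntegrable_iff_integrableOn_Icc_of_le hab] at hf ⊢
  refine (integrableOn_mul_sum_Icc (fun k ↦ if k = 0 then 0 else θ k) (m := 0) ha hf).congr_fun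
    (fun t ht ↦ ?_) measurableSet_Icc
  simp only [sum_Icc_one_floor_eq_sum_Icc_zero θ (ha.trans ht.1)]

lemma sum_int_mul_eq_sub_sub_integral_mul (θ : ℤ → 𝕜) (ha : 0 ≤ a) (hab : a ≤ b)
    (hf : ∀ x ∈ Set.Icc a b, HasDerivAt f (f' x) x) (hf' : IntervalIntegrable f' volume a b) :
    ∑ n ∈ Ioc ⌊a⌋ ⌊b⌋, θ n * f n =
      f b * ∑ n ∈ Icc 1 ⌊b⌋, θ n - f a * ∑ n ∈ Icc 1 ⌊a⌋, θ n -
        ∫ t in a..b, f' t * ∑ n ∈ Icc 1 ⌊t⌋, θ n := by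
  have hb : 0 ≤ b := ha.trans hab
  have hderiv : Set.EqOn f' (deriv f) (Set.Icc a b) := fun x hx ↦ (hf x hx).deriv.symm
  have hint : IntegrableOn (deriv f) (Set.Icc a b) :=
    ((intervalIntegrable_iff_integrableOn_Icc_of_le hab).1 hf').congr_fun hderiv measurableSet_Icc
  -- Mathlib's formula sums from `0`, so the coefficient at `0` is replaced by `0`.
  have habel := sum_mul_eq_sub_sub_integral_mul (fun k : ℕ ↦ if k = 0 then 0 else θ k) ha hab
    (fun t ht ↦ (hf t ht).differentiableAt) hint
  have hsum : ∑ n ∈ Ioc ⌊a⌋ ⌊b⌋, θ n * f n =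
      ∑ k ∈ Ioc ⌊a⌋₊ ⌊b⌋₊, f k * if k = 0 then 0 else θ k := by
    rw [← Int.natCast_floor_eq_floor ha, ← Int.natCast_floor_eq_floor hb, sum_Ioc_natCast]
    refine sum_congr rfl fun k hk ↦ ?_
    rw [if_neg (Nat.ne_zero_of_lt (mem_Ioc.1 hk).1), mul_comm, Int.cast_natCast]
  have hintegral : ∫ t in a..b, f' t * ∑ n ∈ Icc 1 ⌊t⌋, θ n =
      ∫ t in a..b, deriv f t * ∑ k ∈ Icc 0 ⌊t⌋₊, if k = 0 then 0 else θ k := by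
    refine intervalIntegral.integral_congr fun t ht ↦ ?_
    rw [Set.uIcc_of_le hab] at ht
    simp only [hderiv ht, sum_Icc_one_floor_eq_sum_Icc_zero θ (ha.trans ht.1)]
  rw [hsum, habel, hintegral, intervalIntegral.integral_of_le hab,
    sum_Icc_one_floor_eq_sum_Icc_zero θ ha, sum_Icc_one_floor_eq_sum_Icc_zero θ hb]

lemma integral_deriv_mul_const_mul (c : 𝕜)
    (hf : ∀ x ∈ Set.uIcc a b, HasDerivAt f (f' x) x) (hf' : IntervalIntegrable f' volume a b) :
    ∫ t in a..b, f' t * (c * t) = f b * (c * b) - f a * (c * a) - c * ∫ t in a..b, f t := by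
  have hlin : ∀ x : ℝ, HasDerivAt (fun t : ℝ ↦ c * (t : 𝕜)) c x := fun x ↦ by
    simpa using ((RCLike.ofRealCLM (K := 𝕜)).hasDerivAt (x := x)).const_mul c
  have hparts := intervalIntegral.integral_mul_deriv_eq_deriv_mul hf (fun x _ ↦ hlin x) hf'
    intervalIntegrable_const
  rw [intervalIntegral.integral_mul_const] at hparts
  linear_combination hparts

variable {θ : ℤ → 𝕜} {c : 𝕜} {E : ℝ → 𝕜}

lemma sum_mul_sub_const_mul_integral_eq (ha : 0 ≤ a) (hab : a ≤ b)
    (hE : ∀ t ∈ Set.Icc a b, ∑ n ∈ Icc 1 ⌊t⌋, θ n = c * t + E t)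
    (hf : ∀ x ∈ Set.Icc a b, HasDerivAt f (f' x) x) (hf' : IntervalIntegrable f' volume a b) :
    ∑ n ∈ Ioc ⌊a⌋ ⌊b⌋, θ n * f n - c * ∫ t in a..b, f t =
      f b * E b - f a * E a - ∫ t in a..b, f' t * E t := by
  have huIcc : Set.uIcc a b = Set.Icc a b := Set.uIcc_of_le hab
  have hsum_int : IntervalIntegrable (fun t ↦ f' t * ∑ n ∈ Icc 1 ⌊t⌋, θ n) volume a b :=
    intervalIntegrable_mul_sum_Icc_one θ ha hab hf'
  have hlin_int : IntervalIntegrable (fun t ↦ f' t * (c * t)) volume a b :=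
    hf'.mul_continuousOn (by fun_prop)
  have hsplit : ∫ t in a..b, f' t * E t =
      (∫ t in a..b, f' t * ∑ n ∈ Icc 1 ⌊t⌋, θ n) - ∫ t in a..b, f' t * (c * t) := by
    rw [← intervalIntegral.integral_sub hsum_int hlin_int]
    refine intervalIntegral.integral_congr fun t ht ↦ ?_
    simp only [hE t (huIcc ▸ ht)]
    ring
  rw [hsplit, integral_deriv_mul_const_mul c (by rwa [huIcc]) hf',
    sum_int_mul_eq_sub_sub_integral_mul θ ha hab hf hf', hE a (Set.left_mem_Icc.2 hab),
    hE b (Set.right_mem_Icc.2 hab)]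
  ring

lemma norm_sum_mul_sub_const_mul_integral_le {M : ℝ} (ha : 0 ≤ a) (hab : a ≤ b)
    (hE : ∀ t ∈ Set.Icc a b, ∑ n ∈ Icc 1 ⌊t⌋, θ n = c * t + E t)
    (hM : ∀ t ∈ Set.Icc a b, ‖E t‖ ≤ M)
    (hf : ∀ x ∈ Set.Icc a b, HasDerivAt f (f' x) x) (hf' : IntervalIntegrable f' volume a b) :
    ‖∑ n ∈ Ioc ⌊a⌋ ⌊b⌋, θ n * f n - c * ∫ t in a..b, f t‖ ≤
      (‖f b‖ + ‖f a‖ + ∫ t in a..b, ‖f' t‖) * M := by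
  have hmul : ∀ z : 𝕜, ∀ t ∈ Set.Icc a b, ‖z * E t‖ ≤ ‖z‖ * M := fun z t ht ↦
    (norm_mul z (E t)).trans_le (mul_le_mul_of_nonneg_left (hM t ht) (norm_nonneg z))
  have hint : ‖∫ t in a..b, f' t * E t‖ ≤ (∫ t in a..b, ‖f' t‖) * M := by
    rw [← intervalIntegral.integral_mul_const]
    exact intervalIntegral.norm_integral_le_of_norm_le hab
      (.of_forall fun t ht ↦ hmul (f' t) t (Set.Ioc_subset_Icc_self ht)) (hf'.norm.mul_const M)
  calc ‖∑ n ∈ Ioc ⌊a⌋ ⌊b⌋, θ n * f n - c * ∫ t in a..b, f t‖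
      = ‖f b * E b - f a * E a - ∫ t in a..b, f' t * E t‖ := by
        rw [sum_mul_sub_const_mul_integral_eq ha hab hE hf hf']
    _ ≤ ‖f b * E b‖ + ‖f a * E a‖ + ‖∫ t in a..b, f' t * E t‖ :=
        (norm_sub_le _ _).trans (add_le_add_left (norm_sub_le _ _) _)
    _ ≤ ‖f b‖ * M + ‖f a‖ * M + (∫ t in a..b, ‖f' t‖) * M :=
        add_le_add_three (hmul _ b (Set.right_mem_Icc.2 hab)) (hmul _ a (Set.left_mem_Icc.2 hab))
          hint
    _ = (‖f b‖ + ‖f a‖ + ∫ t in a..b, ‖f' t‖) * M := by ring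

end AbelSummation

theorem sum_product_arithmetic_continuous_general {𝕜 : Type*} [RCLike 𝕜] (θ : ℤ → 𝕜) (c : 𝕜)
    (E : ℝ → 𝕜) {t₁ t₂ : ℝ} (ht₁ : 0 ≤ t₁) (ht : t₁ ≤ t₂)
    (hθ : ∀ t ∈ Set.Icc t₁ t₂, ∑ n ∈ Finset.Icc (1 : ℤ) ⌊t⌋, θ n = c * t + E t)
    (g g' : ℝ → ℝ) (R : ℕ) (hg : ∀ x ∈ Set.Icc t₁ t₂, HasDerivAt g (g' x) x)
    (hR : SignChangesAtMost R g' t₁ t₂) {ME Mg : ℝ} (hE : ∀ t ∈ Set.Icc t₁ t₂, ‖E t‖ ≤ ME)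
    (hMg : ∀ t ∈ Set.Icc t₁ t₂, |g t| ≤ Mg) :
    ‖∑ n ∈ Finset.Icc (⌊t₁⌋ + 1) ⌊t₂⌋, θ n * (g (n : ℝ) : 𝕜) -
        c * ∫ t in t₁..t₂, (g t : 𝕜)‖ ≤ 4 * (R + 1) * ME * Mg := by
  have hl : t₁ ∈ Set.Icc t₁ t₂ := Set.left_mem_Icc.2 ht
  have hr : t₂ ∈ Set.Icc t₁ t₂ := Set.right_mem_Icc.2 ht
  have hME : 0 ≤ ME := (norm_nonneg _).trans (hE t₁ hl)
  have hMg₀ : 0 ≤ Mg := (abs_nonneg _).trans (hMg t₁ hl)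
  have hvar : ∫ t in t₁..t₂, |g' t| ≤ (R + 1) * (2 * Mg) := hR.integral_abs_deriv_le hg hMg
  have hderiv : ∀ x ∈ Set.Icc t₁ t₂, HasDerivAt (fun t ↦ (g t : 𝕜)) (g' x : 𝕜) x := fun x hx ↦
    (RCLike.ofRealCLM (K := 𝕜)).hasFDerivAt.comp_hasDerivAt x (hg x hx)
  have hint := hR.intervalIntegrable_deriv hg
  have hbound := norm_sum_mul_sub_const_mul_integral_le ht₁ ht hθ hE hderiv
    ⟨hint.1.ofReal, hint.2.ofReal⟩
  simp only [RCLike.norm_ofReal] at hbound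
  rw [Finset.Icc_add_one_left_eq_Ioc]
  calc ‖∑ n ∈ Finset.Ioc ⌊t₁⌋ ⌊t₂⌋, θ n * (g n : 𝕜) - c * ∫ t in t₁..t₂, (g t : 𝕜)‖
      ≤ (|g t₂| + |g t₁| + ∫ t in t₁..t₂, |g' t|) * ME := hbound
    _ ≤ (Mg + Mg + (R + 1) * (2 * Mg)) * ME := by gcongr; exacts [hMg t₂ hr, hMg t₁ hl]
    _ = (2 * (R + 2)) * (ME * Mg) := by ring
    _ ≤ (4 * (R + 1)) * (ME * Mg) :=
        mul_le_mul_of_nonneg_right (by linarith [R.cast_nonneg (α := ℝ)]) (mul_nonneg hME hMg₀)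
    _ = 4 * (R + 1) * ME * Mg := by ring

/-- Partial summation estimate: if the summatory function of `θ` is `c·t + E(t)` and `g` has a
continuous derivative whose sign changes only `R` times on `[t₁, t₂]`, then
`∑_{t₁ < n ≤ t₂} θ(n) g(n)` equals `c ∫_{t₁}^{t₂} g` up to
`O((R+1) · sup |E| · sup |g|)` with an absolute implied constant. -/
theorem sum_product_arithmetic_continuous :
    ∃ K : ℝ, 0 < K ∧
      ∀ (θ : ℤ → ℝ) (c : ℝ) (E : ℝ → ℝ),
        0 ≤ c →
        (∀ t : ℝ, 0 ≤ t → ∑ n ∈ Finset.Icc (1 : ℤ) ⌊t⌋, θ n = c * t + E t) →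
        ∀ (t₁ t₂ : ℝ), 0 ≤ t₁ → t₁ ≤ t₂ →
        ∀ (g g' : ℝ → ℝ) (R : ℕ),
          (∀ x ∈ Set.Icc t₁ t₂, HasDerivAt g (g' x) x) →
          ContinuousOn g' (Set.Icc t₁ t₂) →
          (∃ s : ℕ → ℝ, s 0 = t₁ ∧ s (R + 1) = t₂ ∧ (∀ i ≤ R, s i ≤ s (i + 1)) ∧
            ∀ i ≤ R, (∀ x ∈ Set.Icc (s i) (s (i + 1)), 0 ≤ g' x) ∨
                     (∀ x ∈ Set.Icc (s i) (s (i + 1)), g' x ≤ 0)) →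
        ∀ ME Mg : ℝ,
          (∀ t ∈ Set.Icc t₁ t₂, |E t| ≤ ME) →
          (∀ t ∈ Set.Icc t₁ t₂, |g t| ≤ Mg) →
          |(∑ n ∈ Finset.Icc (⌊t₁⌋ + 1) ⌊t₂⌋, θ n * g (n : ℝ)) -
              c * ∫ t in t₁..t₂, g t| ≤ K * (R + 1) * ME * Mg :=
  ⟨4, by norm_num, fun θ c E _ hθ _ _ ht₁ ht g g' R hg _ hR _ _ hE hMg ↦
    sum_product_arithmetic_continuous_general θ c E ht₁ ht (fun t h ↦ hθ t (ht₁.trans h.1)) g g' R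
      hg hR hE hMg⟩
end

section
/- There is an absolute constant K such that for all nonzero real numbers a and b, the Lebesgue measure of the set {t ∈ ℝ : |a·t² + b| ≤ 1} is at most K·min{|a|^{−1/2}, |a·b|^{−1/2}}. -/
open MeasureTheory

/-!
Put `s = √|b/a|`. The reverse triangle inequality turns `|a t² + b| ≤ 1` into
`||t| - s| (|t| + s) ≤ 1/|a|`. Bounding the second factor below by `||t| - s|` gives
`||t| - s| ≤ |a|^{-1/2}`, and bounding it below by `s` gives `||t| - s| ≤ |ab|^{-1/2}`. So `t` lies
within the smaller of these two radii of `s` or of `-s`.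
-/

section OrderedRing

variable {R : Type*} [CommRing R] [LinearOrder R] [IsStrictOrderedRing R]

lemma abs_abs_sub_abs_mul_abs_add_abs (x y : R) :
    |(|x| - |y|)| * (|x| + |y|) = |x ^ 2 - y ^ 2| := by
  rw [← sq_abs x, ← sq_abs y, sq_sub_sq, abs_mul, mul_comm,
    abs_of_nonneg (add_nonneg (abs_nonneg x) (abs_nonneg y))]

lemma sq_abs_sub_abs_le_abs_sq_sub_sq (x y : R) : (|x| - |y|) ^ 2 ≤ |x ^ 2 - y ^ 2| := by
  rw [← abs_abs_sub_abs_mul_abs_add_abs, ← sq_abs, sq]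
  gcongr
  simpa only [abs_abs] using abs_sub (|x|) (|y|)

lemma abs_abs_sub_abs_mul_abs_le_abs_sq_sub_sq (x y : R) :
    |(|x| - |y|)| * |y| ≤ |x ^ 2 - y ^ 2| := by
  rw [← abs_abs_sub_abs_mul_abs_add_abs]
  gcongr
  exact le_add_of_nonneg_left (abs_nonneg x)

end OrderedRing

lemma abs_abs_sub_sqrt_abs_le_min {t c δ : ℝ} (hc : c ≠ 0) (h : |t ^ 2 + c| ≤ δ) :
    |(|t| - √|c|)| ≤ min √δ (δ / √|c|) := by
  have htriangle : |(|t ^ 2| - |c|)| ≤ |t ^ 2 + c| := by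
    simpa only [abs_neg, sub_neg_eq_add] using abs_abs_sub_abs_le_abs_sub (t ^ 2) (-c)
  have hδ : |t ^ 2 - √|c| ^ 2| ≤ δ := by
    rw [Real.sq_sqrt (abs_nonneg c), ← abs_sq t]
    exact htriangle.trans h
  have hs : |(√|c|)| = √|c| := abs_of_nonneg (Real.sqrt_nonneg _)
  refine le_min (Real.abs_le_sqrt ?_) ((le_div_iff₀ (Real.sqrt_pos.2 (abs_pos.2 hc))).2 ?_)
  · simpa only [hs] using (sq_abs_sub_abs_le_abs_sq_sub_sq t √|c|).trans hδ
  · simpa only [hs] using (abs_abs_sub_abs_mul_abs_le_abs_sq_sub_sq t √|c|).trans hδ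

lemma mem_closedBall_union_of_abs_abs_sub_le {t s ρ : ℝ} (h : |(|t| - s)| ≤ ρ) :
    t ∈ Metric.closedBall s ρ ∪ Metric.closedBall (-s) ρ := by
  rcases abs_choice t with ht | ht
  · left
    rwa [Metric.mem_closedBall, Real.dist_eq, ← ht]
  · right
    rwa [Metric.mem_closedBall, Real.dist_eq, sub_neg_eq_add, ← abs_neg, neg_add', ← ht]

lemma volume_abs_abs_sub_le (s ρ : ℝ) :
    volume {t : ℝ | |(|t| - s)| ≤ ρ} ≤ ENNReal.ofReal (4 * ρ) :=
  calc volume {t : ℝ | |(|t| - s)| ≤ ρ}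
      ≤ volume (Metric.closedBall s ρ) + volume (Metric.closedBall (-s) ρ) :=
        (measure_mono fun _ => mem_closedBall_union_of_abs_abs_sub_le).trans
          (measure_union_le _ _)
    _ = 2 * ENNReal.ofReal (2 * ρ) := by simp only [Real.volume_closedBall, two_mul]
    _ = ENNReal.ofReal (4 * ρ) := by
        rw [← ENNReal.ofReal_ofNat 2, ← ENNReal.ofReal_mul zero_le_two, ← mul_assoc]
        norm_num

lemma volume_abs_sq_add_le {c : ℝ} (hc : c ≠ 0) (δ : ℝ) :
    volume {t : ℝ | |t ^ 2 + c| ≤ δ} ≤ ENNReal.ofReal (4 * min √δ (δ / √|c|)) :=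
  (measure_mono fun _ ht => abs_abs_sub_sqrt_abs_le_min hc ht).trans (volume_abs_abs_sub_le _ _)

lemma abs_mul_add_le_iff {K : Type*} [Field K] [LinearOrder K] [IsStrictOrderedRing K]
    {a : K} (ha : a ≠ 0) (b x δ : K) : |a * x + b| ≤ δ ↔ |x + b / a| ≤ δ / |a| := by
  rw [le_div_iff₀' (abs_pos.2 ha), ← abs_mul, mul_add, mul_div_cancel₀ b ha]

lemma div_abs_div_sqrt_abs_div (a b δ : ℝ) : δ / |a| / √|b / a| = δ / √|a * b| :=
  calc δ / |a| / √|b / a| = δ * (√|a| / |a|) / √|b| := by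
        rw [abs_div, Real.sqrt_div (abs_nonneg b), div_div_eq_mul_div, mul_div_assoc',
          div_mul_eq_mul_div]
    _ = δ / √|a * b| := by
        rw [Real.sqrt_div_self, ← div_eq_mul_inv, div_div, abs_mul, Real.sqrt_mul (abs_nonneg a)]

lemma volume_abs_mul_sq_add_le {a b : ℝ} (ha : a ≠ 0) (hb : b ≠ 0) (δ : ℝ) :
    volume {t : ℝ | |a * t ^ 2 + b| ≤ δ} ≤
      ENNReal.ofReal (4 * min √(δ / |a|) (δ / √|a * b|)) := by
  simp only [abs_mul_add_le_iff ha]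
  simpa only [div_abs_div_sqrt_abs_div] using volume_abs_sq_add_le (div_ne_zero hb ha) (δ / |a|)

lemma rpow_neg_half_eq_inv_sqrt {x : ℝ} (hx : 0 ≤ x) : x ^ (-(1 / 2) : ℝ) = (√x)⁻¹ := by
  rw [Real.rpow_neg hx, Real.sqrt_eq_rpow]

/-- The measure of `{t : |a t² + b| ≤ 1}` is `O(min{|a|^{-1/2}, |ab|^{-1/2}})`. -/
theorem measure_abs_quadratic_le :
    ∃ K : ℝ, 0 < K ∧ ∀ a b : ℝ, a ≠ 0 → b ≠ 0 →
      volume {t : ℝ | |a * t ^ 2 + b| ≤ 1} ≤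
        ENNReal.ofReal (K * min (|a| ^ (-(1 / 2) : ℝ)) (|a * b| ^ (-(1 / 2) : ℝ))) := by
  refine ⟨4, by norm_num, fun a b ha hb => ?_⟩
  rw [rpow_neg_half_eq_inv_sqrt (abs_nonneg a), rpow_neg_half_eq_inv_sqrt (abs_nonneg (a * b))]
  simpa only [one_div, Real.sqrt_inv] using volume_abs_mul_sq_add_le ha hb 1
end

section
/- There is an absolute constant K such that for all nonzero real numbers a and b, the Lebesgue measure of the set {t ∈ ℝ : |a·t² + b·t| ≤ 1} is at most K·min{|a|^{−1/2}, |b|^{−1}}. -/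
open MeasureTheory

/-!
The polynomial `a t² + b t = a t (t + b / a)` has roots at distance `|b| / |a|`, so the condition
bounds the product of the distances from `t` to its roots by `δ = 1 / |a|`. If `x` has distances
`u`, `v` to two points `p`, `q` and `u v ≤ δ`, then `w = min u v` satisfies both `w² ≤ u v ≤ δ` and
`w * dist p q ≤ w (u + v) ≤ 2 u v ≤ 2 δ`. So `t` lies within `min (√δ) (2 δ / dist p q)`, that is
`min (|a|^{-1/2}) (2 |b|⁻¹)`, of one of the two roots.
-/

section ProductOfDistances

variable {X : Type*} [PseudoMetricSpace X] {p q x : X} {δ : ℝ}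

lemma min_dist_le_sqrt_of_dist_mul_dist_le (hx : dist x p * dist x q ≤ δ) :
    min (dist x p) (dist x q) ≤ √δ := by
  refine Real.le_sqrt_of_sq_le ?_
  calc min (dist x p) (dist x q) ^ 2
      = min (dist x p) (dist x q) * min (dist x p) (dist x q) := sq _
    _ ≤ dist x p * dist x q := by
      gcongr
      exacts [min_le_left _ _, min_le_right _ _]
    _ ≤ δ := hx

lemma min_dist_mul_dist_le (x p q : X) :
    min (dist x p) (dist x q) * dist p q ≤ 2 * (dist x p * dist x q) := by
  calc min (dist x p) (dist x q) * dist p q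
      ≤ min (dist x p) (dist x q) * (dist x p + dist x q) := by
        gcongr
        exact dist_triangle_left p q x
    _ = dist x p * min (dist x p) (dist x q) + min (dist x p) (dist x q) * dist x q := by ring
    _ ≤ dist x p * dist x q + dist x p * dist x q := by
      gcongr
      exacts [min_le_right _ _, min_le_left _ _]
    _ = 2 * (dist x p * dist x q) := (two_mul _).symm

lemma setOf_dist_mul_dist_le_subset_closedBall_union (hpq : 0 < dist p q) :
    {x | dist x p * dist x q ≤ δ} ⊆
      Metric.closedBall p (min √δ (2 * δ / dist p q)) ∪
        Metric.closedBall q (min √δ (2 * δ / dist p q)) := by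
  intro x (hx : dist x p * dist x q ≤ δ)
  have hmin : min (dist x p) (dist x q) ≤ min √δ (2 * δ / dist p q) := by
    refine le_min (min_dist_le_sqrt_of_dist_mul_dist_le hx) ((le_div_iff₀ hpq).2 ?_)
    exact (min_dist_mul_dist_le x p q).trans (by gcongr)
  exact min_le_iff.1 hmin

end ProductOfDistances

lemma volume_setOf_dist_mul_dist_le {p q : ℝ} (hpq : p ≠ q) (δ : ℝ) :
    volume {t : ℝ | dist t p * dist t q ≤ δ} ≤
      ENNReal.ofReal (4 * min √δ (2 * δ / dist p q)) := by
  set r := min √δ (2 * δ / dist p q)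
  calc volume {t : ℝ | dist t p * dist t q ≤ δ}
      ≤ volume (Metric.closedBall p r ∪ Metric.closedBall q r) :=
        measure_mono (setOf_dist_mul_dist_le_subset_closedBall_union (dist_pos.2 hpq))
    _ ≤ volume (Metric.closedBall p r) + volume (Metric.closedBall q r) := measure_union_le _ _
    _ = 2 * ENNReal.ofReal (2 * r) := by
      rw [Real.volume_closedBall, Real.volume_closedBall, two_mul (ENNReal.ofReal _)]
    _ = ENNReal.ofReal (4 * r) := by
      rw [← ENNReal.ofReal_ofNat 2, ← ENNReal.ofReal_mul zero_le_two]
      ring_nf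

lemma abs_mul_sq_add_mul_eq {a : ℝ} (ha : a ≠ 0) (b t : ℝ) :
    |a * t ^ 2 + b * t| = |a| * (dist t 0 * dist t (-(b / a))) := by
  have hfactor : a * t ^ 2 + b * t = a * ((t - 0) * (t - -(b / a))) := by
    field_simp
    ring
  rw [hfactor, abs_mul, abs_mul, Real.dist_eq, Real.dist_eq]

lemma volume_setOf_abs_mul_sq_add_mul_le {a b : ℝ} (ha : a ≠ 0) (hb : b ≠ 0) (ε : ℝ) :
    volume {t : ℝ | |a * t ^ 2 + b * t| ≤ ε} ≤
      ENNReal.ofReal (4 * min √(ε / |a|) (2 * ε / |b|)) := by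
  have hset : {t : ℝ | |a * t ^ 2 + b * t| ≤ ε} =
      {t : ℝ | dist t 0 * dist t (-(b / a)) ≤ ε / |a|} := by
    ext t
    simp only [Set.mem_ofPred_eq, abs_mul_sq_add_mul_eq ha, le_div_iff₀' (abs_pos.2 ha)]
  have hroots : (0 : ℝ) ≠ -(b / a) := (neg_ne_zero.2 (div_ne_zero hb ha)).symm
  have hratio : 2 * (ε / |a|) / dist 0 (-(b / a)) = 2 * ε / |b| := by
    rw [dist_zero_left, norm_neg, Real.norm_eq_abs, abs_div, ← mul_div_assoc,
      div_div_div_cancel_right₀ (abs_ne_zero.2 ha)]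
  rw [hset, ← hratio]
  exact volume_setOf_dist_mul_dist_le hroots _

/-- The measure of `{t : |a t² + b t| ≤ 1}` is `O(min{|a|^{-1/2}, |b|^{-1}})`. -/
theorem measure_abs_tt_t_le :
    ∃ K : ℝ, 0 < K ∧ ∀ a b : ℝ, a ≠ 0 → b ≠ 0 →
      volume {t : ℝ | |a * t ^ 2 + b * t| ≤ 1} ≤
        ENNReal.ofReal (K * min (|a| ^ (-(1 / 2) : ℝ)) |b|⁻¹) := by
  refine ⟨8, by norm_num, fun a b ha hb => ?_⟩
  have hsqrt : √(1 / |a|) = |a| ^ (-(1 / 2) : ℝ) := by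
    rw [one_div, Real.sqrt_inv, Real.sqrt_eq_rpow, Real.rpow_neg (abs_nonneg a)]
  refine (volume_setOf_abs_mul_sq_add_mul_le ha hb 1).trans (ENNReal.ofReal_le_ofReal ?_)
  calc 4 * min √(1 / |a|) (2 * 1 / |b|)
      = 4 * min (|a| ^ (-(1 / 2) : ℝ)) (2 * |b|⁻¹) := by
        rw [hsqrt, mul_one, div_eq_mul_inv 2 |b|]
    _ ≤ 4 * min (2 * |a| ^ (-(1 / 2) : ℝ)) (2 * |b|⁻¹) := by
      gcongr
      exact le_mul_of_one_le_left (by positivity) one_le_two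
    _ = 8 * min (|a| ^ (-(1 / 2) : ℝ)) |b|⁻¹ := by
      rw [← mul_min_of_nonneg _ _ zero_le_two]
      ring
end

section
/- There is an absolute constant K such that for all nonzero real numbers a and b, the two-dimensional Lebesgue measure of the set {(t,u) ∈ ℝ² : |a·t²·u + b·t·u²| ≤ 1} is at most K·|a·b|^{−1/3}. -/
/-!
Up to sign, the change of variables `x = a t / c`, `y = b u / c` with `c = |ab|^{1/3}` turns
`a t² u + b t u²` into `x y (x + y)`, and its determinant has absolute value `|ab| / c² = c`. So it
suffices that `|x y (x + y)| ≤ 1` defines a region of finite area. Put `z = -(x + y)`. Of three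
numbers with sum zero, the two largest in absolute value agree up to a factor `2`, so if `s` is the
smallest and `w` another one, then `|s|³ ≤ |x y z| ≤ 1` and `|s| w² ≤ 2 |x y z| ≤ 2`, whence
`|s| ≤ 3 / (1 + w²)`. The region is thus covered by three cusps, each of area `6π`.
-/

open MeasureTheory

section SmallestSummand

variable {𝕜 : Type*} [Field 𝕜] [LinearOrder 𝕜] [IsStrictOrderedRing 𝕜] {x y z : 𝕜}

lemma abs_le_three_div_one_add_sq_of_add_eq_zero (hsum : x + y + z = 0) (hprod : |x * y * z| ≤ 1)
    (hxy : |x| ≤ |y|) (hxz : |x| ≤ |z|) : |x| ≤ 3 / (1 + y ^ 2) := by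
  rw [abs_mul, abs_mul] at hprod
  have hx : |x| ≤ 1 := by
    refine (pow_le_one_iff_of_nonneg (abs_nonneg x) three_ne_zero).1 ?_
    calc |x| ^ 3 = |x| * |x| * |x| := by ring
      _ ≤ |x| * |y| * |z| := by gcongr
      _ ≤ 1 := hprod
  have hyz : |y| ≤ 2 * |z| := by
    calc |y| = |x + z| := by rw [← abs_neg, show -y = x + z by linear_combination -hsum]
      _ ≤ |x| + |z| := abs_add_le x z
      _ ≤ 2 * |z| := by linarith
  have hxyy : |x| * y ^ 2 ≤ 2 := by
    calc |x| * y ^ 2 = |x| * |y| * |y| := by rw [← sq_abs]; ring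
      _ ≤ |x| * |y| * (2 * |z|) := by gcongr
      _ = 2 * (|x| * |y| * |z|) := by ring
      _ ≤ 2 := by linarith
  rw [le_div_iff₀ (by positivity)]
  linarith

lemma abs_le_three_div_one_add_sq_or_of_add_eq_zero (hsum : x + y + z = 0)
    (hprod : |x * y * z| ≤ 1) :
    |x| ≤ 3 / (1 + y ^ 2) ∨ |y| ≤ 3 / (1 + x ^ 2) ∨ |z| ≤ 3 / (1 + y ^ 2) := by
  have hsmallest : (|x| ≤ |y| ∧ |x| ≤ |z|) ∨ (|y| ≤ |x| ∧ |y| ≤ |z|) ∨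
      (|z| ≤ |y| ∧ |z| ≤ |x|) := by grind
  rcases hsmallest with ⟨hxy, hxz⟩ | ⟨hyx, hyz⟩ | ⟨hzy, hzx⟩
  · exact .inl (abs_le_three_div_one_add_sq_of_add_eq_zero hsum hprod hxy hxz)
  · refine .inr (.inl (abs_le_three_div_one_add_sq_of_add_eq_zero (z := z) ?_ ?_ hyx hyz))
    · rwa [add_comm y x]
    · rwa [mul_comm y x]
  · refine .inr (.inr (abs_le_three_div_one_add_sq_of_add_eq_zero (z := x) ?_ ?_ hzy hzx))
    · rwa [add_comm z y, ← add_rotate]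
    · rwa [mul_comm z y, ← mul_rotate]

end SmallestSummand

lemma volume_prod_abs_sub_le {α : Type*} [MeasurableSpace α] (ν : Measure α) [SFinite ν]
    {g r : α → ℝ} (hg : Measurable g) (hr : Measurable r) :
    (volume.prod ν) {p : ℝ × α | |p.1 - g p.2| ≤ r p.2} = ∫⁻ y, ENNReal.ofReal (2 * r y) ∂ν := by
  rw [Measure.prod_apply_symm (measurableSet_le (by fun_prop) (by fun_prop))]
  exact lintegral_congr fun y => Real.volume_closedBall (g y) (r y)

lemma lintegral_inv_one_add_sq :
    ∫⁻ y : ℝ, ENNReal.ofReal (1 + y ^ 2)⁻¹ = ENNReal.ofReal Real.pi := by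
  rw [← ofReal_integral_eq_lintegral_ofReal integrable_inv_one_add_sq
    (.of_forall fun y => by positivity), integral_univ_inv_one_add_sq]

/-- The neighbourhood of the graph `x = g y` whose horizontal slice at height `y` has half-width
`C / (1 + y²)`; for linear `g` it surrounds a line and thins out at both ends. -/
def cuspRegion (C : ℝ) (g : ℝ → ℝ) : Set (ℝ × ℝ) :=
  {p | |p.1 - g p.2| ≤ C / (1 + p.2 ^ 2)}

lemma volume_cuspRegion (C : ℝ) {g : ℝ → ℝ} (hg : Measurable g) :
    volume (cuspRegion C g) = ENNReal.ofReal (2 * C * Real.pi) := by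
  calc volume (cuspRegion C g)
      = ∫⁻ y : ℝ, ENNReal.ofReal (2 * (C / (1 + y ^ 2))) :=
        volume_prod_abs_sub_le volume (r := fun y => C / (1 + y ^ 2)) hg (by fun_prop)
    _ = ∫⁻ y : ℝ, ENNReal.ofReal (2 * C) * ENNReal.ofReal (1 + y ^ 2)⁻¹ := by
        congr! 2 with y
        rw [← ENNReal.ofReal_mul' (by positivity), div_eq_mul_inv, mul_assoc]
    _ = ENNReal.ofReal (2 * C * Real.pi) := by
        rw [lintegral_const_mul _ (by fun_prop), lintegral_inv_one_add_sq,
          ENNReal.ofReal_mul' Real.pi_nonneg]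

/-- The sublevel set `|x y (x + y)| ≤ 1`, the normal form of all the sets
`|a t² u + b t u²| ≤ 1` with `a b ≠ 0` under diagonal changes of variables. -/
def cubicRegion : Set (ℝ × ℝ) :=
  {p | |p.1 * p.2 * (p.1 + p.2)| ≤ 1}

lemma cubicRegion_subset :
    cubicRegion ⊆ cuspRegion 3 (fun _ => 0) ∪ Prod.swap ⁻¹' cuspRegion 3 (fun _ => 0) ∪
      cuspRegion 3 (fun y => -y) := by
  rintro ⟨x, y⟩ hxy
  have hprod : |x * y * -(x + y)| ≤ 1 := by rwa [mul_neg, abs_neg]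
  rcases abs_le_three_div_one_add_sq_or_of_add_eq_zero (add_neg_cancel (x + y)) hprod
    with hx | hy | hz
  · exact .inl (.inl (by simpa [cuspRegion] using hx))
  · exact .inl (.inr (by simpa [cuspRegion] using hy))
  · exact .inr (by simpa [cuspRegion] using (abs_neg (x + y)).symm.trans_le hz)

lemma volume_cubicRegion_le : volume cubicRegion ≤ ENNReal.ofReal (18 * Real.pi) := by
  have hswap : volume (Prod.swap ⁻¹' cuspRegion 3 fun _ => 0) =
      volume (cuspRegion 3 fun _ => 0) :=
    MeasurePreserving.measure_preimage_equiv (f := MeasurableEquiv.prodComm)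
      Measure.measurePreserving_swap _
  calc volume cubicRegion
      ≤ volume (cuspRegion 3 fun _ => 0) + volume (Prod.swap ⁻¹' cuspRegion 3 fun _ => 0) +
          volume (cuspRegion 3 fun y => -y) :=
        (measure_mono cubicRegion_subset).trans <|
          (measure_union_le _ _).trans (by gcongr; exact measure_union_le _ _)
    _ = ENNReal.ofReal (18 * Real.pi) := by
        rw [hswap, volume_cuspRegion 3 measurable_const, volume_cuspRegion 3 measurable_neg,
          ← ENNReal.ofReal_add (by positivity) (by positivity),
          ← ENNReal.ofReal_add (by positivity) (by positivity)]
        ring_nf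

lemma volume_preimage_prodMap_mul_left {r s : ℝ} (hr : r ≠ 0) (hs : s ≠ 0) (S : Set (ℝ × ℝ)) :
    volume (Prod.map (r * ·) (s * ·) ⁻¹' S) = ENNReal.ofReal |(r * s)⁻¹| * volume S := by
  let L : ℝ × ℝ →ₗ[ℝ] ℝ × ℝ := (r • LinearMap.id).prodMap (s • LinearMap.id)
  have hdet : LinearMap.det L = r * s := by
    simp [L, LinearMap.det_prodMap]
  have hL : LinearMap.det L ≠ 0 := hdet ▸ mul_ne_zero hr hs
  rw [← hdet]
  exact Measure.addHaar_preimage_linearMap volume hL S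

lemma setOf_abs_ttu_tuu_le_eq_preimage {a b c : ℝ} (hc : c ≠ 0) (hc3 : c ^ 3 = |a * b|) :
    {p : ℝ × ℝ | |a * p.1 ^ 2 * p.2 + b * p.1 * p.2 ^ 2| ≤ 1} =
      Prod.map (a / c * ·) (b / c * ·) ⁻¹' cubicRegion := by
  ext ⟨t, u⟩
  have hform : a / c * t * (b / c * u) * (a / c * t + b / c * u) =
      a * b / c ^ 3 * (a * t ^ 2 * u + b * t * u ^ 2) := by
    field_simp
  have hsign : |a * b / c ^ 3| = 1 := by
    rw [hc3, abs_div, abs_abs, ← hc3, div_self (pow_ne_zero 3 hc)]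
  simp only [cubicRegion, Set.mem_preimage, Set.mem_ofPred_eq, Prod.map_apply, hform]
  rw [abs_mul (a * b / c ^ 3), hsign, one_mul]

lemma volume_abs_ttu_tuu_le_eq {a b : ℝ} (ha : a ≠ 0) (hb : b ≠ 0) :
    volume {p : ℝ × ℝ | |a * p.1 ^ 2 * p.2 + b * p.1 * p.2 ^ 2| ≤ 1} =
      ENNReal.ofReal (|a * b| ^ (-(1 / 3) : ℝ)) * volume cubicRegion := by
  have hab : 0 < |a * b| := abs_pos.2 (mul_ne_zero ha hb)
  set c : ℝ := |a * b| ^ (1 / 3 : ℝ) with hc_def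
  have hc : 0 < c := Real.rpow_pos_of_pos hab _
  have hc3 : c ^ 3 = |a * b| := by
    rw [hc_def, ← Real.rpow_mul_natCast hab.le]
    norm_num
  have hdet : |(a / c * (b / c))⁻¹| = |a * b| ^ (-(1 / 3) : ℝ) := by
    rw [Real.rpow_neg hab.le, ← hc_def, abs_inv, div_mul_div_comm, abs_div, ← hc3,
      abs_of_pos (mul_pos hc hc)]
    field_simp
  rw [setOf_abs_ttu_tuu_le_eq_preimage hc.ne' hc3,
    volume_preimage_prodMap_mul_left (div_ne_zero ha hc.ne') (div_ne_zero hb hc.ne'), hdet]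

/-- The measure of `{(t,u) : |a t² u + b t u²| ≤ 1}` is `O(|ab|^{-1/3})`. -/
theorem measure_abs_ttu_tuu_le :
    ∃ K : ℝ, 0 < K ∧ ∀ a b : ℝ, a ≠ 0 → b ≠ 0 →
      volume {p : ℝ × ℝ | |a * p.1 ^ 2 * p.2 + b * p.1 * p.2 ^ 2| ≤ 1} ≤
        ENNReal.ofReal (K * |a * b| ^ (-(1 / 3) : ℝ)) := by
  refine ⟨18 * Real.pi, by positivity, fun a b ha hb => ?_⟩
  rw [volume_abs_ttu_tuu_le_eq ha hb, mul_comm (18 * Real.pi), ENNReal.ofReal_mul (by positivity)]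
  gcongr
  exact volume_cubicRegion_le
end

section
/- For every integer k > 1 there is a constant K (depending only on k) such that for all nonzero real numbers a and b, the two-dimensional Lebesgue measure of the set {(t,u) ∈ ℝ² : |a·t² + b·t·u^k| ≤ 1} is at most K·|a|^{−(k−1)/(2k)}·|b|^{−1/k}. -/
open MeasureTheory

/-!
The dilation `(t, u) ↦ (α t, β u)` turns the coefficients `(a, b)` into `(a α², b α β ^ k)`, so it
is enough to bound the measure when `|a| = |b| = 1`. The slice at height `u` is then
`{t | |t| |t - c| ≤ 1}` with `|c| = |u| ^ k`. The distance from `t` to the nearer of `0` and `c` is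
at most `1`, and also at most `2 / |c|` because the farther one is at distance at least `|c| / 2`.
Hence the slice has length `O(1 / (1 + |u| ^ k))`, which is integrable in `u` since `k ≥ 2`.
-/

lemma norm_mul_one_add_norm_sub_le_three {E : Type*} [SeminormedAddGroup E] {x y : E}
    (hxy : ‖x‖ ≤ ‖y‖) (h : ‖x‖ * ‖y‖ ≤ 1) :
    ‖x‖ * (1 + ‖x - y‖) ≤ 3 := by
  have hx : ‖x‖ ≤ 1 := by nlinarith [norm_nonneg x]
  calc ‖x‖ * (1 + ‖x - y‖) ≤ ‖x‖ * (1 + (‖y‖ + ‖y‖)) := by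
        gcongr
        exact (norm_sub_le x y).trans (by gcongr)
    _ = ‖x‖ + 2 * (‖x‖ * ‖y‖) := by ring
    _ ≤ 3 := by linarith

lemma setOf_norm_mul_norm_sub_le_one_subset {E : Type*} [SeminormedAddCommGroup E] (c : E) :
    {t : E | ‖t‖ * ‖t - c‖ ≤ 1} ⊆
      Metric.closedBall 0 (3 / (1 + ‖c‖)) ∪ Metric.closedBall c (3 / (1 + ‖c‖)) := by
  intro t ht
  rw [Set.mem_union, mem_closedBall_zero_iff, mem_closedBall_iff_norm,
    le_div_iff₀ (by positivity), le_div_iff₀ (by positivity)]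
  rcases le_total ‖t‖ ‖t - c‖ with near_zero | near_c
  · left
    simpa only [sub_sub_cancel] using norm_mul_one_add_norm_sub_le_three near_zero ht
  · right
    simpa only [sub_sub_cancel_left, norm_neg] using
      norm_mul_one_add_norm_sub_le_three near_c ((mul_comm _ _).trans_le ht)

lemma volume_setOf_abs_mul_abs_sub_le_one_le (c : ℝ) :
    volume {t : ℝ | |t| * |t - c| ≤ 1} ≤ ENNReal.ofReal (12 * (1 + |c|)⁻¹) := by
  calc volume {t : ℝ | |t| * |t - c| ≤ 1}
      ≤ volume (Metric.closedBall 0 (3 / (1 + |c|)) ∪ Metric.closedBall c (3 / (1 + |c|))) :=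
        measure_mono (setOf_norm_mul_norm_sub_le_one_subset c)
    _ ≤ ENNReal.ofReal (2 * (3 / (1 + |c|))) + ENNReal.ofReal (2 * (3 / (1 + |c|))) := by
        simpa only [Real.volume_closedBall] using
          measure_union_le (μ := volume) (Metric.closedBall 0 (3 / (1 + |c|)))
            (Metric.closedBall c (3 / (1 + |c|)))
    _ = ENNReal.ofReal (12 * (1 + |c|)⁻¹) := by
        rw [← ENNReal.ofReal_add (by positivity) (by positivity)]
        ring_nf

lemma inv_one_add_abs_pow_le {k : ℕ} (hk : 2 ≤ k) (u : ℝ) :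
    (1 + |u| ^ k)⁻¹ ≤ 2 * (1 + u ^ 2)⁻¹ := by
  have hsq : u ^ 2 ≤ 1 + |u| ^ k := by
    rw [← sq_abs]
    rcases le_total |u| 1 with hu | hu
    · linarith [pow_le_one₀ (abs_nonneg u) hu (n := 2), pow_nonneg (abs_nonneg u) k]
    · linarith [pow_le_pow_right₀ hu hk]
  rw [← div_eq_mul_inv, inv_le_comm₀ (by positivity) (by positivity), inv_div]
  linarith [pow_nonneg (abs_nonneg u) k]

lemma lintegral_inv_one_add_abs_pow_le {k : ℕ} (hk : 2 ≤ k) :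
    ∫⁻ u : ℝ, ENNReal.ofReal (1 + |u| ^ k)⁻¹ ≤ ENNReal.ofReal (2 * Real.pi) := by
  calc ∫⁻ u : ℝ, ENNReal.ofReal (1 + |u| ^ k)⁻¹
      ≤ ∫⁻ u : ℝ, ENNReal.ofReal (2 * (1 + u ^ 2)⁻¹) :=
        lintegral_mono fun u => ENNReal.ofReal_le_ofReal (inv_one_add_abs_pow_le hk u)
    _ = ENNReal.ofReal (∫ u : ℝ, 2 * (1 + u ^ 2)⁻¹) :=
        (ofReal_integral_eq_lintegral_ofReal (integrable_inv_one_add_sq.const_mul 2)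
          (.of_forall fun u => by positivity)).symm
    _ = ENNReal.ofReal (2 * Real.pi) := by
        rw [integral_const_mul, integral_univ_inv_one_add_sq]

/-- The sublevel set of `(t, u) ↦ a t² + b t u ^ k`, as a function of its coefficients, so that
dilations can be expressed as changes of `a` and `b`. -/
def sublevelSet (k : ℕ) (a b : ℝ) : Set (ℝ × ℝ) :=
  {p | |a * p.1 ^ 2 + b * p.1 * p.2 ^ k| ≤ 1}

lemma measurableSet_sublevelSet (k : ℕ) (a b : ℝ) : MeasurableSet (sublevelSet k a b) :=
  (isClosed_le (by fun_prop) (by fun_prop)).measurableSet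

lemma volume_slice_sublevelSet_le (k : ℕ) {a b : ℝ} (ha : |a| = 1) (hb : |b| = 1) (u : ℝ) :
    volume ((fun t => (t, u)) ⁻¹' sublevelSet k a b) ≤ ENNReal.ofReal (12 * (1 + |u| ^ k)⁻¹) := by
  have ha₀ : a ≠ 0 := by rintro rfl; simp at ha
  set c := -(b / a * u ^ k) with hc
  have hc_abs : |c| = |u| ^ k := by rw [hc, abs_neg, abs_mul, abs_div, ha, hb, abs_pow]; ring
  have hslice : (fun t => (t, u)) ⁻¹' sublevelSet k a b = {t | |t| * |t - c| ≤ 1} := by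
    ext t
    have hfactor : a * t ^ 2 + b * t * u ^ k = a * (t * (t - c)) := by rw [hc]; field_simp; ring
    change |a * t ^ 2 + b * t * u ^ k| ≤ 1 ↔ |t| * |t - c| ≤ 1
    rw [hfactor, abs_mul, ha, one_mul, abs_mul]
  rw [hslice, ← hc_abs]
  exact volume_setOf_abs_mul_abs_sub_le_one_le c

lemma volume_sublevelSet_le_of_abs_eq_one {k : ℕ} (hk : 2 ≤ k) {a b : ℝ} (ha : |a| = 1)
    (hb : |b| = 1) : volume (sublevelSet k a b) ≤ ENNReal.ofReal (24 * Real.pi) := by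
  calc volume (sublevelSet k a b)
      = ∫⁻ u : ℝ, volume ((fun t => (t, u)) ⁻¹' sublevelSet k a b) := by
        rw [Measure.volume_eq_prod, Measure.prod_apply_symm (measurableSet_sublevelSet k a b)]
    _ ≤ ∫⁻ u : ℝ, ENNReal.ofReal 12 * ENNReal.ofReal (1 + |u| ^ k)⁻¹ :=
        lintegral_mono fun u => (volume_slice_sublevelSet_le k ha hb u).trans_eq
          (ENNReal.ofReal_mul (by norm_num))
    _ = ENNReal.ofReal 12 * ∫⁻ u : ℝ, ENNReal.ofReal (1 + |u| ^ k)⁻¹ :=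
        lintegral_const_mul' _ _ ENNReal.ofReal_ne_top
    _ ≤ ENNReal.ofReal 12 * ENNReal.ofReal (2 * Real.pi) := by
        gcongr
        exact lintegral_inv_one_add_abs_pow_le hk
    _ = ENNReal.ofReal (24 * Real.pi) := by
        rw [← ENNReal.ofReal_mul (by norm_num)]
        ring_nf

lemma volume_eq_mul_volume_preimage_dilation {α β : ℝ} (hα : α ≠ 0) (hβ : β ≠ 0)
    (s : Set (ℝ × ℝ)) :
    volume s = ENNReal.ofReal |α * β| * volume (Prod.map (α * ·) (β * ·) ⁻¹' s) := by
  let dilation : ℝ × ℝ →ₗ[ℝ] ℝ × ℝ := (LinearMap.mul ℝ ℝ α).prodMap (LinearMap.mul ℝ ℝ β)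
  have hsurj : Function.Surjective dilation :=
    (mul_left_surjective₀ hα).prodMap (mul_left_surjective₀ hβ)
  have hdet : LinearMap.det dilation = α * β := by
    simp only [dilation, LinearMap.det_prodMap, LinearMap.det_ring, LinearMap.mul_apply_apply,
      mul_one]
  calc volume s = volume (dilation '' (dilation ⁻¹' s)) := by rw [Set.image_preimage_eq s hsurj]
    _ = ENNReal.ofReal |α * β| * volume (dilation ⁻¹' s) := by
        rw [Measure.addHaar_image_linearMap, hdet]

lemma volume_sublevelSet_eq_mul_of_dilation (k : ℕ) (a b : ℝ) {α β : ℝ}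
    (hα : α ≠ 0) (hβ : β ≠ 0) :
    volume (sublevelSet k a b) =
      ENNReal.ofReal |α * β| * volume (sublevelSet k (a * α ^ 2) (b * (α * β ^ k))) := by
  rw [volume_eq_mul_volume_preimage_dilation hα hβ]
  congr 2
  ext ⟨t, u⟩
  simp only [sublevelSet, Set.mem_preimage, Set.mem_ofPred_eq, Prod.map_apply]
  ring_nf

lemma exists_normalizing_dilation {k : ℕ} (hk : k ≠ 0) {x y : ℝ} (hx : 0 < x) (hy : 0 < y) :
    ∃ α β : ℝ, 0 < α ∧ 0 < β ∧ x * α ^ 2 = 1 ∧ y * (α * β ^ k) = 1 ∧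
      α * β = x ^ (-(((k : ℝ) - 1) / (2 * (k : ℝ)))) * y ^ (-(1 / (k : ℝ))) := by
  have hk₀ : (k : ℝ) ≠ 0 := Nat.cast_ne_zero.2 hk
  refine ⟨x ^ (-(1 / 2) : ℝ), x ^ (1 / (2 * k) : ℝ) * y ^ (-(1 / k) : ℝ), by positivity,
    by positivity, ?_, ?_, ?_⟩
  · rw [← Real.rpow_mul_natCast hx.le]
    norm_num [Real.rpow_neg_one, hx.ne']
  · have hpow : (x ^ (1 / (2 * k) : ℝ) * y ^ (-(1 / k) : ℝ)) ^ k = x ^ (1 / 2 : ℝ) * y⁻¹ := by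
      rw [mul_pow, ← Real.rpow_mul_natCast hx.le, ← Real.rpow_mul_natCast hy.le,
        ← Real.rpow_neg_one y]
      congr 2 <;> field_simp
    rw [hpow, ← mul_assoc (x ^ _), ← Real.rpow_add hx, neg_add_cancel, Real.rpow_zero, one_mul,
      mul_inv_cancel₀ hy.ne']
  · rw [← mul_assoc, ← Real.rpow_add hx]
    congr 2
    field_simp
    ring

/-- For `k > 1`, the measure of `{(t,u) : |a t² + b t u^k| ≤ 1}` is
`O(|a|^{-(k-1)/(2k)} |b|^{-1/k})`. -/
theorem measure_abs_tt_tuk_le (k : ℕ) (hk : 1 < k) :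
    ∃ K : ℝ, 0 < K ∧ ∀ a b : ℝ, a ≠ 0 → b ≠ 0 →
      volume {p : ℝ × ℝ | |a * p.1 ^ 2 + b * p.1 * p.2 ^ k| ≤ 1} ≤
        ENNReal.ofReal (K * |a| ^ (-(((k : ℝ) - 1) / (2 * (k : ℝ)))) * |b| ^ (-(1 / (k : ℝ)))) := by
  refine ⟨24 * Real.pi, by positivity, fun a b ha hb => ?_⟩
  obtain ⟨α, β, hα, hβ, ha_scaled, hb_scaled, hαβ⟩ :=
    exists_normalizing_dilation (k := k) (by lia) (abs_pos.2 ha) (abs_pos.2 hb)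
  have ha_one : |a * α ^ 2| = 1 := by rwa [abs_mul, abs_of_pos (pow_pos hα 2)]
  have hb_one : |b * (α * β ^ k)| = 1 := by
    rwa [abs_mul, abs_of_pos (mul_pos hα (pow_pos hβ k))]
  calc volume (sublevelSet k a b)
      = ENNReal.ofReal (α * β) * volume (sublevelSet k (a * α ^ 2) (b * (α * β ^ k))) := by
        rw [volume_sublevelSet_eq_mul_of_dilation k a b hα.ne' hβ.ne', abs_of_pos (mul_pos hα hβ)]
    _ ≤ ENNReal.ofReal (α * β) * ENNReal.ofReal (24 * Real.pi) := by
        gcongr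
        exact volume_sublevelSet_le_of_abs_eq_one hk ha_one hb_one
    _ = _ := by
        rw [← ENNReal.ofReal_mul (by positivity), hαβ, mul_comm, mul_assoc (24 * Real.pi)]
end

section
/- Let C ≥ 1 be real and let θ : ℤ₊ → ℝ be a function such that ∑_{0 < n ≤ t} |(θ∗μ)(n)|·n ≤ t·(log(t+2))^{C−1} for all t ≥ 0. Then for every positive integer q and every integer a with gcd(a,q) = 1, the sum c₀ = ∑_{d > 0, gcd(d,q)=1} (θ∗μ)(d)/d converges, and there is a constant K depending only on C such that |∑_{0 < n ≤ t, n ≡ a (mod q)} θ(n) − c₀·t/q| ≤ K·(log(t+2))^C for all t ≥ 0. -/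
open scoped Classical

/-- The Dirichlet convolution `θ ∗ μ` of a real-valued arithmetic function with the Möbius
function. -/
noncomputable def dconv (θ : ℕ → ℝ) (n : ℕ) : ℝ :=
  ∑ d ∈ n.divisors, (ArithmeticFunction.moebius d : ℝ) * θ (n / d)

/-!
With `f = θ ∗ μ`, Möbius inversion gives `θ n = ∑_{d ∣ n} f d`, so that the sum of `θ` over the
`n ≤ t` with `n ≡ a (mod q)` equals `∑_{d ≤ t} f d * N d`, where `N d` counts the multiples of `d`
among these `n`. As `a` is coprime to `q`, `N d = 0` unless `d` is coprime to `q`, and then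
`n ≡ a (mod q)`, `n ≡ 0 (mod d)` amount to one congruence modulo `q * d`, whence
`N d = t / (q * d) + O(1)`.

The error is therefore `O(∑_{d ≤ t} |f d| + t * ∑_{d > t} |f d| / d)`. On a dyadic block
`u < d ≤ 2 * u` the growth hypothesis gives `∑ |f d| ≤ 2 * log (2 * u + 2) ^ (C - 1)`. Below `t`
this is at most a constant times the increment of `log (· + 2) ^ C` across the block, so these
bounds telescope; above `t` the weights `1 / d` make them decay geometrically, up to a power of the
index of the block.
-/

open Finset Real

section MoebiusInversion

lemma sum_divisors_dconv (θ : ℕ → ℝ) {n : ℕ} (hn : 0 < n) :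
    ∑ d ∈ n.divisors, dconv θ d = θ n := by
  refine ArithmeticFunction.sum_eq_iff_sum_mul_moebius_eq.2 (fun m _ => ?_) n hn
  rw [Nat.sum_divisorsAntidiagonal (fun i j => ((ArithmeticFunction.moebius i : ℤ) : ℝ) * θ j)]
  rfl

lemma sum_filter_eq_sum_dconv_mul_card (θ : ℕ → ℝ) (N : ℕ) (P : ℕ → Prop) [DecidablePred P] :
    ∑ n ∈ Icc 1 N with P n, θ n =
      ∑ d ∈ Icc 1 N, dconv θ d * #{n ∈ Icc 1 N | P n ∧ d ∣ n} := by
  calc ∑ n ∈ Icc 1 N with P n, θ n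
      = ∑ n ∈ Icc 1 N with P n, ∑ d ∈ n.divisors, dconv θ d :=
        sum_congr rfl fun n hn =>
          (sum_divisors_dconv θ (mem_Icc.1 (mem_filter.1 hn).1).1).symm
    _ = ∑ d ∈ Icc 1 N, ∑ n ∈ Icc 1 N with P n ∧ d ∣ n, dconv θ d := by
        refine sum_comm' fun n d => ?_
        simp only [mem_filter, mem_Icc, Nat.mem_divisors]
        refine ⟨fun ⟨⟨hn, hP⟩, hd, _⟩ => ⟨⟨hn, hP, hd⟩, Nat.pos_of_dvd_of_pos hd hn.1,
          (Nat.le_of_dvd hn.1 hd).trans hn.2⟩, fun ⟨⟨hn, hP, hd⟩, _⟩ =>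
          ⟨⟨hn, hP⟩, hd, (Nat.succ_le_iff.1 hn.1).ne'⟩⟩
    _ = ∑ d ∈ Icc 1 N, dconv θ d * #{n ∈ Icc 1 N | P n ∧ d ∣ n} := by
        simp only [sum_const, nsmul_eq_mul, mul_comm]

end MoebiusInversion

section Counting

lemma abs_card_filter_modEq_sub_div_le {m : ℕ} (hm : 0 < m) (v N : ℕ) :
    |(#{n ∈ Icc 1 N | n ≡ v [MOD m]} : ℝ) - N / m| ≤ 1 := by
  have hcard := Nat.Ioc_filter_modEq_card 0 N hm v
  rw [max_eq_left (sub_nonneg.2 (by gcongr; exact_mod_cast N.zero_le))] at hcard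
  have hcard_rat : (#{n ∈ Icc 1 N | n ≡ v [MOD m]} : ℚ) =
      ⌊((N : ℚ) - v) / m⌋ - ⌊(((0 : ℕ) : ℚ) - v) / m⌋ := by exact_mod_cast hcard
  have hdiff : ((N : ℚ) - v) / m - (((0 : ℕ) : ℚ) - v) / m = N / m := by push_cast; ring
  have key : |(#{n ∈ Icc 1 N | n ≡ v [MOD m]} : ℚ) - N / m| ≤ 1 := by
    rw [hcard_rat, ← hdiff, abs_le]
    constructor <;>
    linarith [Int.floor_le (((N : ℚ) - v) / m), Int.lt_floor_add_one (((N : ℚ) - v) / m),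
      Int.floor_le ((((0 : ℕ) : ℚ) - v) / m), Int.lt_floor_add_one ((((0 : ℕ) : ℚ) - v) / m)]
  have key_real := (Rat.cast_le (K := ℝ)).2 key
  push_cast at key_real
  exact key_real

lemma abs_card_floor_filter_modEq_sub_div_le {m : ℕ} (hm : 0 < m) (v : ℕ) {t : ℝ} (ht : 0 ≤ t) :
    |(#{n ∈ Icc 1 ⌊t⌋₊ | n ≡ v [MOD m]} : ℝ) - t / m| ≤ 2 := by
  have hfloor : |(⌊t⌋₊ : ℝ) / m - t / m| ≤ 1 := by
    rw [← sub_div, abs_div, Nat.abs_cast, div_le_one (by positivity), abs_sub_comm,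
      abs_of_nonneg (sub_nonneg.2 (Nat.floor_le ht))]
    have hm' : (1 : ℝ) ≤ m := by exact_mod_cast hm
    linarith [Nat.lt_floor_add_one t]
  linarith [abs_sub_le (#{n ∈ Icc 1 ⌊t⌋₊ | n ≡ v [MOD m]} : ℝ) (⌊t⌋₊ / m) (t / m),
    abs_card_filter_modEq_sub_div_le hm v ⌊t⌋₊]

lemma exists_forall_intModEq_and_dvd_iff {q d : ℕ} (hq : 0 < q) (hqd : q.Coprime d) (a : ℤ) :
    ∃ v : ℕ, ∀ n : ℕ, ((n : ℤ) ≡ a [ZMOD q] ∧ d ∣ n) ↔ n ≡ v [MOD q * d] := by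
  obtain ⟨b, -, hb⟩ := Int.existsUnique_equiv_nat a (Nat.cast_pos.2 hq)
  obtain ⟨v, hvb, hv0⟩ := Nat.chineseRemainder hqd b 0
  refine ⟨v, fun n => ?_⟩
  rw [← Nat.modEq_and_modEq_iff_modEq_mul hqd, ← Nat.modEq_zero_iff_dvd]
  refine and_congr ?_ ⟨fun h => h.trans hv0.symm, fun h => h.trans hv0⟩
  have hva : (v : ℤ) ≡ a [ZMOD q] := (Int.natCast_modEq_iff.2 hvb).trans hb
  rw [← Int.natCast_modEq_iff]
  exact ⟨fun h => h.trans hva.symm, fun h => h.trans hva⟩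

lemma coprime_of_intModEq_of_dvd {q d n : ℕ} {a : ℤ} (ha : Int.gcd a q = 1)
    (hna : (n : ℤ) ≡ a [ZMOD q]) (hdn : d ∣ n) : d.Coprime q := by
  have hnq : n.Coprime q := by
    rw [Nat.coprime_iff_gcd_eq_one, ← Int.gcd_natCast_natCast, ← ha, ← Int.gcd_emod, hna,
      Int.gcd_emod]
  exact hnq.coprime_dvd_left hdn

lemma abs_card_filter_intModEq_and_dvd_sub_le {q d : ℕ} {a : ℤ} (hq : 0 < q)
    (ha : Int.gcd a q = 1) (hd : 0 < d) {t : ℝ} (ht : 0 ≤ t) :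
    |(#{n ∈ Icc 1 ⌊t⌋₊ | ((n : ℕ) : ℤ) ≡ a [ZMOD q] ∧ d ∣ n} : ℝ) -
      if d.Coprime q then t / (q * d) else 0| ≤ 2 := by
  split_ifs with hdq
  · obtain ⟨v, hv⟩ := exists_forall_intModEq_and_dvd_iff hq hdq.symm a
    simp only [hv]
    simpa only [Nat.cast_mul] using abs_card_floor_filter_modEq_sub_div_le (Nat.mul_pos hq hd) v ht
  · rw [filter_eq_empty_iff.2 fun n _ hn => hdq (coprime_of_intModEq_of_dvd ha hn.1 hn.2)]
    simp

end Counting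

section Logarithm

lemma min_mul_rpow_mul_sub_le_rpow_sub_rpow {C x y : ℝ} (hC : 0 ≤ C) (hx : 0 < x) (hy : 0 ≤ y)
    (hyx : y ≤ x) : min C 1 * x ^ (C - 1) * (x - y) ≤ x ^ C - y ^ C := by
  have hratio : (y / x) ^ C ≤ 1 + min C 1 * (y / x - 1) :=
    calc (y / x) ^ C ≤ (y / x) ^ min C 1 :=
          rpow_le_rpow_of_exponent_ge' (by positivity) (div_le_one_of_le₀ hyx hx.le)
            (by positivity) (min_le_left C 1)
      _ = (1 + (y / x - 1)) ^ min C 1 := by rw [add_sub_cancel]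
      _ ≤ 1 + min C 1 * (y / x - 1) :=
          rpow_one_add_le_one_add_mul_self (by linarith [div_nonneg hy hx.le]) (by positivity)
            (min_le_right C 1)
  rw [div_rpow hy hx.le, div_le_iff₀ (by positivity)] at hratio
  rw [rpow_sub_one hx.ne']
  calc min C 1 * (x ^ C / x) * (x - y)
      = x ^ C - (1 + min C 1 * (y / x - 1)) * x ^ C := by field_simp; ring
    _ ≤ x ^ C - y ^ C := by linarith

lemma log_add_two_pos {t : ℝ} (ht : 0 ≤ t) : 0 < log (t + 2) :=
  log_pos (by linarith)

lemma log_two_le_log_add_two {t : ℝ} (ht : 0 ≤ t) : log 2 ≤ log (t + 2) :=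
  log_le_log two_pos (by linarith)

lemma log_half_add_two_add_le {t : ℝ} (ht : 1 ≤ t) :
    log (t / 2 + 2) + log (6 / 5) ≤ log (t + 2) := by
  rw [← log_mul (by positivity) (by norm_num)]
  exact log_le_log (by positivity) (by linarith)

lemma log_two_pow_mul_add_two_le {t : ℝ} (ht : 0 ≤ t) (k : ℕ) :
    log (2 ^ k * t + 2) ≤ (k + 1) * log (t + 2) :=
  calc log (2 ^ k * t + 2) ≤ log (2 ^ k * (t + 2)) := by
        refine log_le_log (by positivity) ?_
        linarith [one_le_pow₀ (M₀ := ℝ) one_le_two (n := k)]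
    _ = k * log 2 + log (t + 2) := by rw [log_mul (by positivity) (by positivity), log_pow]
    _ ≤ (k + 1) * log (t + 2) := by
        linarith [mul_le_mul_of_nonneg_left (log_two_le_log_add_two ht) k.cast_nonneg]

lemma log_add_two_rpow_sub_one_le (C : ℝ) {t : ℝ} (ht : 0 ≤ t) :
    log (t + 2) ^ (C - 1) ≤ log (t + 2) ^ C / log 2 := by
  have hlog := log_add_two_pos ht
  rw [rpow_sub_one hlog.ne']
  gcongr
  linarith

lemma min_mul_log_mul_log_rpow_le {C : ℝ} (hC : 0 ≤ C) {t : ℝ} (ht : 1 ≤ t) :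
    min C 1 * log (6 / 5) * log (t + 2) ^ (C - 1) ≤ log (t + 2) ^ C - log (t / 2 + 2) ^ C := by
  have hlog : 0 < log (t + 2) := log_add_two_pos (by linarith)
  have hincr := log_half_add_two_add_le ht
  have hlog65 : 0 ≤ log (6 / 5) := log_nonneg (by norm_num)
  calc min C 1 * log (6 / 5) * log (t + 2) ^ (C - 1)
      = min C 1 * log (t + 2) ^ (C - 1) * log (6 / 5) := by ring
    _ ≤ min C 1 * log (t + 2) ^ (C - 1) * (log (t + 2) - log (t / 2 + 2)) := by
        gcongr
        linarith
    _ ≤ log (t + 2) ^ C - log (t / 2 + 2) ^ C :=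
        min_mul_rpow_mul_sub_le_rpow_sub_rpow hC hlog (log_add_two_pos (by positivity)).le
          (by linarith)

lemma two_div_two_pow_mul_log_rpow_le {C : ℝ} (hC : 0 ≤ C) {t : ℝ} (ht : 0 ≤ t) (k : ℕ) :
    2 / 2 ^ k * log (2 ^ (k + 1) * t + 2) ^ (C - 1) ≤
      8 / log 2 * log (t + 2) ^ C * (((k + 2 : ℕ) : ℝ) ^ C * (1 / 2) ^ (k + 2)) := by
  have hu : 0 ≤ 2 ^ (k + 1) * t := by positivity
  have hlog := log_add_two_pos ht
  calc 2 / 2 ^ k * log (2 ^ (k + 1) * t + 2) ^ (C - 1)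
      ≤ 2 / 2 ^ k * (log (2 ^ (k + 1) * t + 2) ^ C / log 2) := by
        gcongr
        exact log_add_two_rpow_sub_one_le C hu
    _ ≤ 2 / 2 ^ k * ((((k + 2 : ℕ) : ℝ) * log (t + 2)) ^ C / log 2) := by
        gcongr
        · exact (log_add_two_pos hu).le
        · refine (log_two_pow_mul_add_two_le ht (k + 1)).trans_eq ?_
          push_cast
          ring
    _ = 8 / log 2 * log (t + 2) ^ C * (((k + 2 : ℕ) : ℝ) ^ C * (1 / 2) ^ (k + 2)) := by
        rw [mul_rpow (by positivity) hlog.le, one_div_pow]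
        field_simp
        ring

end Logarithm

section Summation

lemma summable_rpow_mul_geometric_of_norm_lt_one (A : ℝ) {r : ℝ} (hr : ‖r‖ < 1) :
    Summable fun n : ℕ => (n : ℝ) ^ A * r ^ n := by
  refine Summable.of_norm_bounded_eventually_nat
    (summable_pow_mul_geometric_of_norm_lt_one ⌈A⌉₊ hr).norm ?_
  filter_upwards [Filter.eventually_ge_atTop 1] with n hn
  have hn' : (1 : ℝ) ≤ n := by exact_mod_cast hn
  rw [norm_mul, norm_mul, norm_of_nonneg (by positivity : 0 ≤ (n : ℝ) ^ A),
    norm_of_nonneg (by positivity : 0 ≤ (n : ℝ) ^ ⌈A⌉₊), ← rpow_natCast (n : ℝ)]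
  gcongr
  exact Nat.le_ceil A

variable {ι E : Type*} [NormedAddCommGroup E] [CompleteSpace E] {g : ι → E} {F : Finset ι} {B : ℝ}

lemma summable_of_sum_norm_le_of_disjoint (hB : ∀ s, Disjoint s F → ∑ i ∈ s, ‖g i‖ ≤ B) :
    Summable g := by
  refine .of_norm
    (summable_of_sum_le (c := ∑ i ∈ F, ‖g i‖ + B) (fun _ => norm_nonneg _) fun s => ?_)
  rw [← sum_inter_add_sum_sdiff s F]
  exact add_le_add (sum_le_sum_of_subset_of_nonneg inter_subset_right fun _ _ _ => norm_nonneg _)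
    (hB _ sdiff_disjoint)

lemma norm_sum_sub_tsum_le_of_disjoint (hB : ∀ s, Disjoint s F → ∑ i ∈ s, ‖g i‖ ≤ B) :
    ‖∑ i ∈ F, g i - ∑' i, g i‖ ≤ B := by
  rw [norm_sub_rev]
  refine le_of_tendsto
    ((summable_of_sum_norm_le_of_disjoint hB).hasSum.sub_const (∑ i ∈ F, g i)).norm ?_
  filter_upwards [Filter.eventually_ge_atTop F] with s hs
  rw [← sum_sdiff hs, add_sub_cancel_right]
  exact (norm_sum_le _ _).trans (hB _ sdiff_disjoint)

end Summation

/-- The bound `∑_{0 < n ≤ t} |f n| * n ≤ t * log (t + 2) ^ (C - 1)` for all `t ≥ 0`, which is the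
growth hypothesis imposed on `f = θ ∗ μ`. -/
def LogGrowthBound (C : ℝ) (f : ℕ → ℝ) : Prop :=
  ∀ t : ℝ, 0 ≤ t → ∑ n ∈ Icc 1 ⌊t⌋₊, |f n| * n ≤ t * log (t + 2) ^ (C - 1)

namespace LogGrowthBound

variable {C : ℝ} {f : ℕ → ℝ}

lemma sum_Ioc_floor_abs_le (hf : LogGrowthBound C f) {u : ℝ} (hu : 0 < u) :
    ∑ d ∈ Ioc ⌊u⌋₊ ⌊2 * u⌋₊, |f d| ≤ 2 * log (2 * u + 2) ^ (C - 1) := by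
  refine le_of_mul_le_mul_left ?_ hu
  calc u * ∑ d ∈ Ioc ⌊u⌋₊ ⌊2 * u⌋₊, |f d|
      ≤ ∑ d ∈ Ioc ⌊u⌋₊ ⌊2 * u⌋₊, |f d| * d := by
        rw [mul_sum]
        refine sum_le_sum fun d hd => ?_
        rw [mul_comm]
        gcongr
        exact (Nat.lt_of_floor_lt (mem_Ioc.1 hd).1).le
    _ ≤ ∑ d ∈ Icc 1 ⌊2 * u⌋₊, |f d| * d :=
        sum_le_sum_of_subset_of_nonneg
          (fun d hd => mem_Icc.2 ⟨Nat.one_le_of_lt (mem_Ioc.1 hd).1, (mem_Ioc.1 hd).2⟩)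
          fun _ _ _ => by positivity
    _ ≤ 2 * u * log (2 * u + 2) ^ (C - 1) := hf _ (by positivity)
    _ = u * (2 * log (2 * u + 2) ^ (C - 1)) := by ring

lemma sum_abs_le (hC : 0 < C) (hf : LogGrowthBound C f) {t : ℝ} (ht : 0 ≤ t) :
    ∑ d ∈ Icc 1 ⌊t⌋₊, |f d| ≤ 2 / (min C 1 * log (6 / 5)) * log (t + 2) ^ C := by
  have : 0 < log (6 / 5) := log_pos (by norm_num)
  induction hN : ⌊t⌋₊ using Nat.strong_induction_on generalizing t with | _ N ih
  subst hN
  obtain ht1 | ht1 := lt_or_ge t 1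
  · rw [Nat.floor_eq_zero.2 ht1]
    have := log_add_two_pos ht
    simp only [zero_lt_one, Icc_eq_empty_of_lt, sum_empty]
    positivity
  have hhalf : ⌊t / 2⌋₊ < ⌊t⌋₊ := by
    rw [Nat.floor_div_ofNat]
    exact Nat.div_lt_self (Nat.floor_pos.2 ht1) one_lt_two
  have hblock := hf.sum_Ioc_floor_abs_le (u := t / 2) (by positivity)
  rw [mul_div_cancel₀ t two_ne_zero] at hblock
  have hincr := min_mul_log_mul_log_rpow_le hC.le ht1
  calc ∑ d ∈ Icc 1 ⌊t⌋₊, |f d|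
      = ∑ d ∈ Icc 1 ⌊t / 2⌋₊, |f d| + ∑ d ∈ Ioc ⌊t / 2⌋₊ ⌊t⌋₊, |f d| :=
        (sum_Ioc_consecutive (fun d => |f d|) (Nat.zero_le _) hhalf.le).symm
    _ ≤ 2 / (min C 1 * log (6 / 5)) * log (t / 2 + 2) ^ C + 2 * log (t + 2) ^ (C - 1) :=
        add_le_add (ih _ hhalf (by positivity) rfl) hblock
    _ = 2 / (min C 1 * log (6 / 5)) *
          (log (t / 2 + 2) ^ C + min C 1 * log (6 / 5) * log (t + 2) ^ (C - 1)) := by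
        field_simp
    _ ≤ 2 / (min C 1 * log (6 / 5)) * log (t + 2) ^ C := by
        gcongr
        linarith

lemma mul_sum_Ioc_abs_div_le (hf : LogGrowthBound C f) {t : ℝ} (ht : 0 < t) (M : ℕ) :
    t * ∑ d ∈ Ioc ⌊t⌋₊ ⌊2 ^ M * t⌋₊, |f d| / d ≤
      ∑ k ∈ range M, 2 / 2 ^ k * log (2 ^ (k + 1) * t + 2) ^ (C - 1) := by
  induction M with
  | zero => simp
  | succ M ih =>
    have hpow : 2 ^ (M + 1) * t = 2 * (2 ^ M * t) := by ring
    have hu : 0 < 2 ^ M * t := by positivity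
    have hblock : t * ∑ d ∈ Ioc ⌊2 ^ M * t⌋₊ ⌊2 ^ (M + 1) * t⌋₊, |f d| / d ≤
        2 / 2 ^ M * log (2 ^ (M + 1) * t + 2) ^ (C - 1) := by
      rw [hpow]
      calc t * ∑ d ∈ Ioc ⌊2 ^ M * t⌋₊ ⌊2 * (2 ^ M * t)⌋₊, |f d| / d
          ≤ t * ∑ d ∈ Ioc ⌊2 ^ M * t⌋₊ ⌊2 * (2 ^ M * t)⌋₊, |f d| / (2 ^ M * t) := by
            gcongr with d hd
            exact (Nat.lt_of_floor_lt (mem_Ioc.1 hd).1).le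
        _ = 1 / 2 ^ M * ∑ d ∈ Ioc ⌊2 ^ M * t⌋₊ ⌊2 * (2 ^ M * t)⌋₊, |f d| := by
            rw [← sum_div]; field_simp
        _ ≤ 1 / 2 ^ M * (2 * log (2 * (2 ^ M * t) + 2) ^ (C - 1)) := by
            gcongr
            exact hf.sum_Ioc_floor_abs_le hu
        _ = 2 / 2 ^ M * log (2 * (2 ^ M * t) + 2) ^ (C - 1) := by ring
    rw [sum_range_succ, ← sum_Ioc_consecutive _
      (Nat.floor_le_floor (le_mul_of_one_le_left ht.le (one_le_pow₀ one_le_two)))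
      (Nat.floor_le_floor (by linarith : 2 ^ M * t ≤ 2 ^ (M + 1) * t)), mul_add]
    exact add_le_add ih hblock

lemma exists_mul_sum_abs_div_le_of_disjoint {C : ℝ} (hC : 0 ≤ C) : ∃ K : ℝ, 0 ≤ K ∧
    ∀ f : ℕ → ℝ, LogGrowthBound C f → ∀ t : ℝ, 0 < t → ∀ s : Finset ℕ,
      Disjoint s (Icc 1 ⌊t⌋₊) → t * ∑ d ∈ s, |f d| / d ≤ K * log (t + 2) ^ C := by
  have hsummable : Summable fun k : ℕ => ((k + 2 : ℕ) : ℝ) ^ C * (1 / 2 : ℝ) ^ (k + 2) :=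
    (summable_nat_add_iff 2).2 (summable_rpow_mul_geometric_of_norm_lt_one C (by norm_num))
  refine ⟨8 / log 2 * ∑' k : ℕ, ((k + 2 : ℕ) : ℝ) ^ C * (1 / 2) ^ (k + 2), by positivity,
    fun f hf t ht s hs => ?_⟩
  have hlog := log_add_two_pos ht.le
  obtain ⟨M, hM⟩ := pow_unbounded_of_one_lt ((s.sup id : ℕ) / t : ℝ) (one_lt_two (α := ℝ))
  have hsub : s ⊆ insert 0 (Ioc ⌊t⌋₊ ⌊2 ^ M * t⌋₊) := by
    intro d hd
    have hle : (d : ℝ) ≤ (s.sup id : ℕ) := by exact_mod_cast le_sup (f := id) hd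
    have hdM : d ≤ ⌊2 ^ M * t⌋₊ := Nat.le_floor (hle.trans ((div_lt_iff₀ ht).1 hM).le)
    have hdt := disjoint_left.1 hs hd
    rw [mem_Icc] at hdt
    rw [mem_insert, mem_Ioc]
    lia
  calc t * ∑ d ∈ s, |f d| / d
      ≤ t * ∑ d ∈ insert 0 (Ioc ⌊t⌋₊ ⌊2 ^ M * t⌋₊), |f d| / d := by
        gcongr
    _ = t * ∑ d ∈ Ioc ⌊t⌋₊ ⌊2 ^ M * t⌋₊, |f d| / d := by
        -- The term at `0` vanishes, as `|f 0| / 0 = 0`.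
        rw [sum_insert_of_eq_zero_if_notMem fun _ => by simp]
    _ ≤ ∑ k ∈ range M, 2 / 2 ^ k * log (2 ^ (k + 1) * t + 2) ^ (C - 1) :=
        hf.mul_sum_Ioc_abs_div_le ht M
    _ ≤ ∑ k ∈ range M, 8 / log 2 * log (t + 2) ^ C *
          (((k + 2 : ℕ) : ℝ) ^ C * (1 / 2) ^ (k + 2)) :=
        sum_le_sum fun k _ => two_div_two_pow_mul_log_rpow_le hC ht.le k
    _ ≤ 8 / log 2 * log (t + 2) ^ C *
          ∑' k : ℕ, ((k + 2 : ℕ) : ℝ) ^ C * (1 / 2) ^ (k + 2) := by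
        rw [← mul_sum]
        gcongr
        exact hsummable.sum_le_tsum _ fun k _ => by positivity
    _ = 8 / log 2 * (∑' k : ℕ, ((k + 2 : ℕ) : ℝ) ^ C * (1 / 2) ^ (k + 2)) *
          log (t + 2) ^ C := by ring

lemma exists_mul_abs_sum_sub_tsum_le {C : ℝ} (hC : 0 ≤ C) : ∃ K : ℝ, 0 ≤ K ∧
    ∀ f g : ℕ → ℝ, LogGrowthBound C f → (∀ d, |g d| ≤ |f d| / d) → Summable g ∧
      ∀ t : ℝ, 0 ≤ t → t * |∑ d ∈ Icc 1 ⌊t⌋₊, g d - ∑' d, g d| ≤ K * log (t + 2) ^ C := by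
  obtain ⟨K, hK, htail⟩ := exists_mul_sum_abs_div_le_of_disjoint hC
  refine ⟨K, hK, fun f g hf hg => ?_⟩
  have hgtail : ∀ t : ℝ, 0 < t → ∀ s, Disjoint s (Icc 1 ⌊t⌋₊) →
      ∑ d ∈ s, ‖g d‖ ≤ K * log (t + 2) ^ C / t := fun t ht s hs =>
    (sum_le_sum fun d _ => hg d).trans ((le_div_iff₀' ht).2 (htail f hf t ht s hs))
  refine ⟨summable_of_sum_norm_le_of_disjoint (hgtail 1 one_pos), fun t ht => ?_⟩
  obtain rfl | ht := ht.eq_or_lt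
  · have := log_add_two_pos le_rfl
    rw [zero_mul]
    positivity
  · exact (le_div_iff₀' ht).1 (norm_sum_sub_tsum_le_of_disjoint (hgtail t ht))

end LogGrowthBound

/-- The `d`-th term of the series `c₀ = ∑_{gcd(d, q) = 1} f d / d`, indexed by all natural numbers
`d`: it is `0` if `d = 0` or `d` is not coprime to `q`. -/
noncomputable def coprimeTerm (f : ℕ → ℝ) (q d : ℕ) : ℝ :=
  if 0 < d ∧ Nat.gcd d q = 1 then f d / d else 0

lemma abs_coprimeTerm_le (f : ℕ → ℝ) (q d : ℕ) : |coprimeTerm f q d| ≤ |f d| / d := by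
  unfold coprimeTerm
  split_ifs
  · rw [abs_div, Nat.abs_cast]
  · rw [abs_zero]
    positivity

lemma abs_sum_modEq_sub_sum_coprimeTerm_le (θ : ℕ → ℝ) {q : ℕ} {a : ℤ} (hq : 0 < q)
    (ha : Int.gcd a q = 1) {t : ℝ} (ht : 0 ≤ t) :
    |(∑ n ∈ Icc 1 ⌊t⌋₊ with ((n : ℕ) : ℤ) ≡ a [ZMOD q], θ n) -
        (∑ d ∈ Icc 1 ⌊t⌋₊, coprimeTerm (dconv θ) q d) * (t / q)| ≤
      2 * ∑ d ∈ Icc 1 ⌊t⌋₊, |dconv θ d| := by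
  rw [sum_filter_eq_sum_dconv_mul_card, sum_mul, ← sum_sub_distrib, mul_sum]
  refine (abs_sum_le_sum_abs _ _).trans (sum_le_sum fun d hd => ?_)
  have hd0 : 0 < d := (mem_Icc.1 hd).1
  have hterm : coprimeTerm (dconv θ) q d * (t / q) =
      dconv θ d * if d.Coprime q then t / (q * d) else 0 := by
    simp only [coprimeTerm, hd0, true_and, Nat.coprime_iff_gcd_eq_one]
    split_ifs
    · field_simp
    · ring
  rw [hterm, ← mul_sub, abs_mul, mul_comm]
  gcongr
  exact abs_card_filter_intModEq_and_dvd_sub_le hq ha hd0 ht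

theorem sum_arithmetic_general (C : ℝ) (hC : 0 < C) :
    ∃ K : ℝ, 0 < K ∧
      ∀ θ : ℕ → ℝ,
        (∀ t : ℝ, 0 ≤ t →
          ∑ n ∈ Finset.Icc 1 ⌊t⌋₊, |dconv θ n| * n ≤ t * Real.log (t + 2) ^ (C - 1)) →
        ∀ (q : ℕ) (a : ℤ), 0 < q → Int.gcd a q = 1 →
          ∃ c₀ : ℝ,
            HasSum (fun d : ℕ => if 0 < d ∧ Nat.gcd d q = 1 then dconv θ d / d else 0) c₀ ∧
            ∀ t : ℝ, 0 ≤ t →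
              |(∑ n ∈ (Finset.Icc 1 ⌊t⌋₊).filter
                    (fun n : ℕ => (n : ℤ) % (q : ℤ) = a % (q : ℤ)), θ n) -
                  c₀ * t / q| ≤ K * Real.log (t + 2) ^ C := by
  obtain ⟨K, hK, htail⟩ := LogGrowthBound.exists_mul_abs_sum_sub_tsum_le hC.le
  have : 0 < log (6 / 5) := log_pos (by norm_num)
  refine ⟨2 * (2 / (min C 1 * log (6 / 5))) + K, by positivity, fun θ hθ q a hq ha => ?_⟩
  obtain ⟨hsummable, hc₀⟩ := htail (dconv θ) _ hθ (abs_coprimeTerm_le (dconv θ) q)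
  refine ⟨_, hsummable.hasSum, fun t ht => ?_⟩
  set c₀ := ∑' d, coprimeTerm (dconv θ) q d
  set S := ∑ d ∈ Icc 1 ⌊t⌋₊, coprimeTerm (dconv θ) q d
  have hSc₀ : |S * (t / q) - c₀ * t / q| ≤ K * log (t + 2) ^ C :=
    calc |S * (t / q) - c₀ * t / q| = t * |S - c₀| / q := by
          rw [show S * (t / q) - c₀ * t / q = t * (S - c₀) / q by ring, abs_div, abs_mul,
            abs_of_nonneg ht, Nat.abs_cast]
      _ ≤ t * |S - c₀| := div_le_self (by positivity) (by exact_mod_cast hq)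
      _ ≤ K * log (t + 2) ^ C := hc₀ t ht
  refine (abs_sub_le _ (S * (t / q)) _).trans
    ((add_le_add (abs_sum_modEq_sub_sum_coprimeTerm_le θ hq ha ht) hSc₀).trans ?_)
  linarith [LogGrowthBound.sum_abs_le hC hθ ht]

/-- If `∑_{0 < n ≤ t} |(θ∗μ)(n)| n ≤ t (log(t+2))^{C-1}`, then for coprime `a, q` the sum
`c₀ = ∑_{gcd(d,q)=1} (θ∗μ)(d)/d` converges and
`∑_{0 < n ≤ t, n ≡ a mod q} θ(n) = c₀ t/q + O_C((log(t+2))^C)`. -/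
theorem sum_arithmetic (C : ℝ) (hC : 1 ≤ C) :
    ∃ K : ℝ, 0 < K ∧
      ∀ θ : ℕ → ℝ,
        (∀ t : ℝ, 0 ≤ t →
          ∑ n ∈ Finset.Icc 1 ⌊t⌋₊, |dconv θ n| * n ≤ t * Real.log (t + 2) ^ (C - 1)) →
        ∀ (q : ℕ) (a : ℤ), 0 < q → Int.gcd a q = 1 →
          ∃ c₀ : ℝ,
            HasSum (fun d : ℕ => if 0 < d ∧ Nat.gcd d q = 1 then dconv θ d / d else 0) c₀ ∧
            ∀ t : ℝ, 0 ≤ t →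
              |(∑ n ∈ (Finset.Icc 1 ⌊t⌋₊).filter
                    (fun n : ℕ => (n : ℤ) % (q : ℤ) = a % (q : ℤ)), θ n) -
                  c₀ * t / q| ≤ K * Real.log (t + 2) ^ C :=
  sum_arithmetic_general C (zero_lt_one.trans_le hC)
end

section
/- Let θ : ℤ₊ → ℝ be non-negative, represented as θ(n) = c·∏_{p^ν ∥ n} A_p(ν) · ∏_{p ∤ n} A_p(0) for a real number c and non-negative functions A_p : ℕ → ℝ for each prime p, where for each n the infinite product ∏_{p ∤ n} A_p(0) converges in the sense that the partial products of its nonzero factors converge to a nonzero limit (the product being 0 if some factor vanishes). Suppose θ is not identically zero. Then for every positive integer n, the Dirichlet convolution satisfies (θ∗μ)(n) = c·∏_{p ∤ n} A_p(0) · ∏_{p^ν ∥ n} (A_p(ν) − A_p(ν−1)). -/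
/-- `θ` is represented by the constant `c` and the local data `A` in the sense that
`θ(n) = c · ∏_{p^ν ∥ n} A_p(ν) · ∏_{p ∤ n} A_p(0)`, the infinite product over the primes not
dividing `n` being convergent. -/
def EulerRep (θ : ℕ → ℝ) (c : ℝ) (A : ℕ → ℕ → ℝ) : Prop :=
  (∀ p ν : ℕ, p.Prime → 0 ≤ A p ν) ∧
  (∀ n : ℕ, 0 < n → Multipliable (fun p : {p : ℕ // p.Prime ∧ ¬ p ∣ n} => A p.1 0)) ∧
  (∀ n : ℕ, 0 < n →
    θ n = c * (∏ p ∈ n.primeFactors, A p (n.factorization p)) *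
      ∏' p : {p : ℕ // p.Prime ∧ ¬ p ∣ n}, A p.1 0)

section EulerProduct

variable {M : Type*} [CommMonoid M] [TopologicalSpace M] [ContinuousMul M] [T2Space M] {m n : ℕ}

lemma tprod_prime_not_dvd_of_dvd (f : ℕ → M) (hn : n ≠ 0) (hmn : m ∣ n)
    (hf : Multipliable fun p : {p : ℕ // p.Prime ∧ ¬ p ∣ n} => f p) :
    ∏' p : {p : ℕ // p.Prime ∧ ¬ p ∣ m}, f p =
      (∏ p ∈ n.primeFactors \ m.primeFactors, f p) *
        ∏' p : {p : ℕ // p.Prime ∧ ¬ p ∣ n}, f p := by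
  have hm : m ≠ 0 := ne_zero_of_dvd_ne_zero hn hmn
  have hunion : {p : ℕ | p.Prime ∧ ¬ p ∣ m} =
      ↑(n.primeFactors \ m.primeFactors) ∪ {p : ℕ | p.Prime ∧ ¬ p ∣ n} := by
    ext p
    have : p ∣ m → p ∣ n := fun h => h.trans hmn
    simp only [Set.mem_ofPred_eq, Set.mem_union, Finset.mem_coe, Finset.mem_sdiff,
      Nat.mem_primeFactors]
    tauto
  have hdisj : Disjoint (↑(n.primeFactors \ m.primeFactors) : Set ℕ)
      {p : ℕ | p.Prime ∧ ¬ p ∣ n} :=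
    Set.disjoint_left.mpr fun p hp hp' =>
      hp'.2 (Nat.dvd_of_mem_primeFactors (Finset.mem_sdiff.mp hp).1)
  have hprod : HasProd (fun p : {p : ℕ | p.Prime ∧ ¬ p ∣ m} => f p) _ :=
    hunion ▸ (Finset.hasProd _ f).mul_disjoint hdisj hf.hasProd
  exact hprod.tprod_eq

lemma prod_primeFactors_mul_tprod_of_dvd (A : ℕ → ℕ → M) (hn : n ≠ 0) (hmn : m ∣ n)
    (hA : Multipliable fun p : {p : ℕ // p.Prime ∧ ¬ p ∣ n} => A p 0) :
    (∏ p ∈ m.primeFactors, A p (m.factorization p)) *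
        ∏' p : {p : ℕ // p.Prime ∧ ¬ p ∣ m}, A p 0 =
      (∏ p ∈ n.primeFactors, A p (m.factorization p)) *
        ∏' p : {p : ℕ // p.Prime ∧ ¬ p ∣ n}, A p 0 := by
  have hzero : ∏ p ∈ n.primeFactors \ m.primeFactors, A p 0 =
      ∏ p ∈ n.primeFactors \ m.primeFactors, A p (m.factorization p) :=
    Finset.prod_congr rfl fun p hp => by
      rw [Finsupp.notMem_support_iff.mp (Finset.mem_sdiff.mp hp).2]
  rw [tprod_prime_not_dvd_of_dvd (A · 0) hn hmn hA, hzero, ← mul_assoc, mul_comm (∏ p ∈ _, _),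
    Finset.prod_sdiff (Nat.primeFactors_mono hmn hn)]

end EulerProduct

section Moebius

open ArithmeticFunction (moebius)

variable {t : Finset ℕ}

lemma factorization_prod_of_forall_prime (ht : ∀ q ∈ t, q.Prime) (p : ℕ) :
    (∏ q ∈ t, q).factorization p = if p ∈ t then 1 else 0 := by
  rw [Nat.factorization_prod_apply fun q hq => (ht q hq).ne_zero,
    Finset.sum_congr rfl fun q hq => by rw [(ht q hq).factorization, Finsupp.single_apply],
    Finset.sum_ite_eq' t p fun _ => 1]

lemma moebius_prod_of_forall_prime (ht : ∀ q ∈ t, q.Prime) :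
    moebius (∏ q ∈ t, q) = (-1) ^ t.card := by
  rw [ArithmeticFunction.isMultiplicative_moebius.map_prod_of_prime t ht,
    Finset.prod_congr rfl fun q hq => ArithmeticFunction.moebius_apply_prime (ht q hq),
    Finset.prod_const]

lemma sum_divisors_moebius_mul {R : Type*} [Ring R] (F : ℕ → R) {n : ℕ} (hn : n ≠ 0) :
    ∑ d ∈ n.divisors, (moebius d : R) * F d =
      ∑ t ∈ n.primeFactors.powerset, (-1) ^ t.card * F (∏ q ∈ t, q) := by
  have hsquarefree : ∀ d ∈ n.divisors, (moebius d : R) * F d ≠ 0 → Squarefree d := by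
    intro d _ hd
    by_contra hsq
    simp [ArithmeticFunction.moebius_eq_zero_of_not_squarefree hsq] at hd
  have hfactors : (UniqueFactorizationMonoid.normalizedFactors n).toFinset = n.primeFactors := by
    rw [Nat.factors_eq]
    rfl
  rw [← Finset.sum_filter_of_ne hsquarefree, Nat.sum_divisors_filter_squarefree hn, hfactors]
  refine Finset.sum_congr rfl fun t ht => ?_
  have hprime : ∀ q ∈ t, q.Prime := fun q hq =>
    Nat.prime_of_mem_primeFactors (Finset.mem_powerset.mp ht hq)
  have hval : t.val.prod = ∏ q ∈ t, q := Finset.prod_val t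
  rw [hval, moebius_prod_of_forall_prime hprime, Int.cast_pow, Int.cast_neg, Int.cast_one]

lemma factorization_div_prod_of_subset_primeFactors {n : ℕ} (ht : t ⊆ n.primeFactors) (p : ℕ) :
    (n / ∏ q ∈ t, q).factorization p = n.factorization p - if p ∈ t then 1 else 0 := by
  have hdvd : ∏ q ∈ t, q ∣ n :=
    (Finset.prod_dvd_prod_of_subset _ _ _ ht).trans (Nat.prod_primeFactors_dvd n)
  rw [Nat.factorization_div hdvd, Finsupp.tsub_apply,
    factorization_prod_of_forall_prime fun q hq => Nat.prime_of_mem_primeFactors (ht hq)]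

lemma sum_divisors_moebius_mul_prod_primeFactors {R : Type*} [CommRing R] (A : ℕ → ℕ → R) {n : ℕ}
    (hn : n ≠ 0) :
    ∑ d ∈ n.divisors, (moebius d : R) * ∏ p ∈ n.primeFactors, A p ((n / d).factorization p) =
      ∏ p ∈ n.primeFactors, (A p (n.factorization p) - A p (n.factorization p - 1)) := by
  rw [sum_divisors_moebius_mul (fun d => ∏ p ∈ n.primeFactors, A p ((n / d).factorization p)) hn,
    Finset.prod_sub]
  refine Finset.sum_congr rfl fun t ht => ?_
  rw [Finset.mem_powerset] at ht
  simp_rw [factorization_div_prod_of_subset_primeFactors ht]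
  rw [← Finset.prod_sdiff ht, mul_assoc]
  congr 2
  · exact Finset.prod_congr rfl fun p hp => by simp [(Finset.mem_sdiff.mp hp).2]
  · exact Finset.prod_congr rfl fun p hp => by simp [hp]

end Moebius

theorem dconv_of_eulerRep_general {R : Type*} [CommRing R] [TopologicalSpace R] [ContinuousMul R]
    [T2Space R] (θ : ℕ → R) (c : R) (A : ℕ → ℕ → R) {n : ℕ} (hn : n ≠ 0)
    (hA : Multipliable fun p : {p : ℕ // p.Prime ∧ ¬ p ∣ n} => A p 0)
    (hθ : ∀ m, m ∣ n → θ m = c * (∏ p ∈ m.primeFactors, A p (m.factorization p)) *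
      ∏' p : {p : ℕ // p.Prime ∧ ¬ p ∣ m}, A p 0) :
    ∑ d ∈ n.divisors, (ArithmeticFunction.moebius d : R) * θ (n / d) =
      c * (∏' p : {p : ℕ // p.Prime ∧ ¬ p ∣ n}, A p 0) *
        ∏ p ∈ n.primeFactors, (A p (n.factorization p) - A p (n.factorization p - 1)) := by
  have hθn : ∀ m, m ∣ n → θ m = c * (∏' p : {p : ℕ // p.Prime ∧ ¬ p ∣ n}, A p 0) *
      ∏ p ∈ n.primeFactors, A p (m.factorization p) := fun m hm => by
    rw [hθ m hm, mul_assoc, prod_primeFactors_mul_tprod_of_dvd A hn hm hA]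
    ring
  rw [← sum_divisors_moebius_mul_prod_primeFactors A hn, Finset.mul_sum]
  refine Finset.sum_congr rfl fun d hd => ?_
  rw [hθn _ (Nat.div_dvd_of_dvd (Nat.dvd_of_mem_divisors hd)), mul_left_comm]

/-- For `θ` of Euler-product shape, `(θ∗μ)(n) = c · ∏_{p ∤ n} A_p(0) ·
∏_{p^ν ∥ n} (A_p(ν) − A_p(ν−1))`. -/
theorem dconv_of_eulerRep (θ : ℕ → ℝ) (c : ℝ) (A : ℕ → ℕ → ℝ)
    (hθ0 : ∀ n : ℕ, 0 ≤ θ n) (hrep : EulerRep θ c A)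
    (hne : ∃ n : ℕ, 0 < n ∧ θ n ≠ 0) :
    ∀ n : ℕ, 0 < n →
      dconv θ n = c * (∏' p : {p : ℕ // p.Prime ∧ ¬ p ∣ n}, A p.1 0) *
        ∏ p ∈ n.primeFactors, (A p (n.factorization p) - A p (n.factorization p - 1)) := by
  exact fun n hn => dconv_of_eulerRep_general θ c A hn.ne' (hrep.2.1 n hn)
    fun m hm => hrep.2.2 m (Nat.pos_of_dvd_of_pos hm hn)
end
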